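/- arXiv:1811.02595 — 2 statements merged into one kernel-verified Lean document; each statement's English description precedes it below -/
import Mathlib

section
/- Let q be a prime power with q ≥ 5 and let B be a Drinfeldian domain over F_q. If the ideal class group of B is trivial, then B is isomorphic as an F_q-algebra to the polynomial ring F_q[T]. -/
open Matrix Polynomial

/-- `B` is a Drinfeldian domain over the finite field `Fq`: a Dedekind domain which is not a
field, finitely generated as an `Fq`-algebra, whose fraction field `K` has `Fq` algebraically
closed in it, and which has exactly one place of `K` "at infinity", i.e. exactly one valuation
subring of `K` containing the image of `Fq` but not containing the image of `B`. -/
structure IsDrinfeldianDomain (Fq : Type*) [Field Fq] [Fintype Fq]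
    (B : Type*) [CommRing B] [IsDomain B] [Algebra Fq B] : Prop where
  isDedekind : IsDedekindDomain B
  not_isField : ¬ IsField B
  finiteType : Algebra.FiniteType Fq B
  algebraicallyClosed : ∀ x : FractionRing B,
    (∃ f : Polynomial Fq, f ≠ 0 ∧
      Polynomial.eval₂ ((algebraMap B (FractionRing B)).comp (algebraMap Fq B)) x f = 0) →
    x ∈ ((algebraMap B (FractionRing B)).comp (algebraMap Fq B)).range
  unique_infinite_place : ∃! v : ValuationSubring (FractionRing B),
    (∀ c : Fq, ((algebraMap B (FractionRing B)).comp (algebraMap Fq B)) c ∈ v) ∧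
    ¬ (∀ b : B, algebraMap B (FractionRing B) b ∈ v)

set_option linter.style.haveILetI false
set_option linter.unusedVariables false
set_option linter.unusedSectionVars false

namespace Drin

/-- coefficients nonnegative from a logarithmic derivative with nonnegative coefficients -/
lemma ps_nonneg (E b : PowerSeries ℝ) (h0 : PowerSeries.coeff 0 E = 1)
    (hE : PowerSeries.X * PowerSeries.derivative ℝ E = b * E)
    (hb : ∀ k, 0 ≤ PowerSeries.coeff k b) :
    ∀ n, 0 ≤ PowerSeries.coeff n E ∧ PowerSeries.coeff n b ≤ n * PowerSeries.coeff n E := by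
  have key : ∀ n : ℕ, (n : ℝ) * PowerSeries.coeff n E
      = ∑ p ∈ Finset.HasAntidiagonal.antidiagonal n, PowerSeries.coeff p.1 b * PowerSeries.coeff p.2 E := by
    intro n
    have := congrArg (PowerSeries.coeff n) hE
    rw [PowerSeries.coeff_mul n b] at this
    rw [← this]
    cases n with
    | zero => simp
    | succ m =>
      rw [mul_comm PowerSeries.X, PowerSeries.coeff_succ_mul_X, PowerSeries.coeff_derivative]
      push_cast; ring
  have hb0 : PowerSeries.coeff 0 b = 0 := by
    have := key 0
    rw [show Finset.HasAntidiagonal.antidiagonal 0 = {((0 : ℕ), (0 : ℕ))} from rfl,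
      Finset.sum_singleton] at this
    simp only [h0, mul_one, Nat.cast_zero] at this
    exact this.symm
  have nn : ∀ n, 0 ≤ PowerSeries.coeff n E := by
    intro n
    induction n using Nat.strong_induction_on with
    | _ n ih =>
      rcases Nat.eq_zero_or_pos n with h | h
      · subst h; rw [h0]; norm_num
      · have : 0 ≤ (n : ℝ) * PowerSeries.coeff n E := by
          rw [key]
          apply Finset.sum_nonneg
          rintro ⟨i, j⟩ hij
          rw [Finset.HasAntidiagonal.mem_antidiagonal] at hij
          rcases Nat.eq_zero_or_pos i with h' | h'
          · subst h'; simp [hb0]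
          · exact mul_nonneg (hb _) (ih _ (by simp at hij ⊢; omega))
        exact nonneg_of_mul_nonneg_right this (by exact_mod_cast h)
  intro n
  refine ⟨nn n, ?_⟩
  rw [key]
  have := Finset.single_le_sum (f := fun p : ℕ × ℕ => PowerSeries.coeff p.1 b * PowerSeries.coeff p.2 E)
    (s := Finset.HasAntidiagonal.antidiagonal n) (fun p _ => mul_nonneg (hb _) (nn _)) (a := (n, 0)) (by simp)
  simpa only [h0, mul_one] using this

/-- the geometric series -/
noncomputable def geo (r : ℝ) : PowerSeries ℝ := PowerSeries.mk fun n => r ^ n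

lemma geo_mul (r : ℝ) : PowerSeries.C r * PowerSeries.X * geo r = geo r - 1 := by
  ext n
  cases n with
  | zero => simp [geo]
  | succ m =>
    rw [mul_comm (PowerSeries.C r), mul_assoc, mul_comm PowerSeries.X, PowerSeries.coeff_succ_mul_X]
    simp [geo, PowerSeries.coeff_one, pow_succ']

lemma geo_inv (r : ℝ) : (1 - PowerSeries.C r * PowerSeries.X) * geo r = 1 := by
  rw [sub_mul, geo_mul]; ring

lemma geo_deriv (r : ℝ) : PowerSeries.X * PowerSeries.derivative ℝ (geo r)
    = (geo r - 1) * geo r := by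
  have h := congrArg (PowerSeries.derivative ℝ) (geo_inv r)
  rw [Derivation.leibniz] at h
  simp only [smul_eq_mul, map_sub, Derivation.map_one_eq_zero, Derivation.leibniz,
    PowerSeries.derivative_C, PowerSeries.derivative_X] at h
  have h2 := geo_inv r
  have h3 := geo_mul r
  have h4 := congrArg (fun z => z * (PowerSeries.X * geo r)) h
  linear_combination h4 + (-(PowerSeries.X * PowerSeries.derivative ℝ (geo r)) + PowerSeries.C r * PowerSeries.X * 0) * h2 + geo r * h3

lemma coeff_mul_geo_bound (u : PowerSeries ℝ) (s A : ℝ) (hs : 0 ≤ s) (hA : 0 ≤ A) (i : ℕ)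
    (h : ∀ k, |PowerSeries.coeff k u| ≤ A * (k + 1) ^ i * s ^ k) :
    ∀ k, |PowerSeries.coeff k (u * geo s)| ≤ A * (k + 1) ^ (i + 1) * s ^ k := by
  intro k
  rw [PowerSeries.coeff_mul]
  refine (Finset.abs_sum_le_sum_abs _ _).trans ?_
  have : ∀ p ∈ Finset.HasAntidiagonal.antidiagonal k,
      |PowerSeries.coeff p.1 u * PowerSeries.coeff p.2 (geo s)| ≤ A * (k + 1) ^ i * s ^ k := by
    rintro ⟨a, b⟩ hab
    rw [Finset.HasAntidiagonal.mem_antidiagonal] at hab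
    simp only at hab ⊢
    rw [abs_mul]
    have h1 : |PowerSeries.coeff b (geo s)| = s ^ b := by
      simp [geo, abs_of_nonneg hs]
    rw [h1]
    calc _ ≤ A * (a + 1) ^ i * s ^ a * s ^ b := by gcongr; exact h a
      _ = A * (a + 1) ^ i * s ^ k := by rw [mul_assoc, ← pow_add, hab]
      _ ≤ _ := by gcongr; omega
  refine (Finset.sum_le_sum this).trans ?_
  simp only [Finset.sum_const, Finset.Nat.card_antidiagonal, nsmul_eq_mul]
  push_cast
  apply le_of_eq; ring

lemma poly_coeff_bound (L : ℝ[X]) (s : ℝ) (hs : 0 < s) (C : ℕ) :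
    ∃ A : ℝ, 0 ≤ A ∧ ∀ k, |PowerSeries.coeff k ((L : PowerSeries ℝ) * geo s ^ C)|
      ≤ A * (k + 1) ^ C * s ^ k := by
  induction C with
  | zero =>
    refine ⟨∑ k ∈ L.support, |L.coeff k| / s ^ k, Finset.sum_nonneg fun _ _ => by positivity, ?_⟩
    intro k
    simp only [pow_zero, mul_one, coeff_coe]
    by_cases hk : k ∈ L.support
    · rw [← div_le_iff₀ (by positivity)]
      exact Finset.single_le_sum (f := fun k => |L.coeff k| / s ^ k) (fun _ _ => by positivity) hk
    · rw [Polynomial.notMem_support_iff.mp hk, abs_zero]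
      exact mul_nonneg (Finset.sum_nonneg fun _ _ => by positivity) (by positivity)
  | succ i ih =>
    obtain ⟨A, hA, h⟩ := ih
    refine ⟨A, hA, ?_⟩
    rw [pow_succ, ← mul_assoc]
    exact coeff_mul_geo_bound _ s A hs.le hA i h

/-- a polynomial whose logarithmic derivative is bounded near z0 does not vanish there -/
lemma no_root (L : ℂ[X]) (hL : L ≠ 0) (z0 : ℂ) (hz0 : z0 ≠ 0) (ρ G : ℝ) (hρ : ‖z0‖ < ρ)
    (h : ∀ z : ℂ, ‖z‖ < ρ → ‖z * L.derivative.eval z‖ ≤ G * ‖L.eval z‖) : L.eval z0 ≠ 0 := by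
  intro hroot
  obtain ⟨M, hM, hM0⟩ := Polynomial.exists_eq_pow_rootMultiplicity_mul_and_not_dvd L hL z0
  set μ := L.rootMultiplicity z0 with hμ
  have hμpos : 0 < μ := (Polynomial.rootMultiplicity_pos hL).mpr hroot
  obtain ⟨ν, hν⟩ : ∃ ν, μ = ν + 1 := ⟨μ - 1, by omega⟩
  have hMz : M.eval z0 ≠ 0 := by
    intro h'; exact hM0 (Polynomial.dvd_iff_isRoot.mpr h')
  have hder : L.derivative = (X - C z0) ^ ν * (C (μ : ℂ) * M + (X - C z0) * M.derivative) := by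
    rw [hM, hν]
    simp only [derivative_mul, derivative_X_sub_C_pow]
    simp only [Nat.add_sub_cancel, map_natCast]
    ring
  have ineq : ∀ z : ℂ, z ≠ z0 → ‖z‖ < ρ →
      ‖z * (μ * M.eval z + (z - z0) * M.derivative.eval z)‖ ≤ G * ‖(z - z0) * M.eval z‖ := by
    intro z hz hzρ
    have h1 := h z hzρ
    rw [hder] at h1
    have hev : L.eval z = (z - z0) ^ (ν + 1) * M.eval z := by
      have := congrArg (Polynomial.eval z) hM
      rw [hν] at this
      simpa using this
    rw [hev, hν] at h1
    simp only [eval_mul, eval_pow, eval_sub, eval_X, eval_C, eval_add] at h1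
    have hpos : 0 < ‖(z - z0) ^ ν‖ := by
      rw [norm_pos_iff]; exact pow_ne_zero _ (sub_ne_zero.mpr hz)
    rw [show z * ((z - z0) ^ ν * (((ν + 1 : ℕ) : ℂ) * eval z M + (z - z0) * eval z (derivative M)))
      = (z - z0) ^ ν * (z * (((ν + 1 : ℕ) : ℂ) * eval z M + (z - z0) * eval z (derivative M))) by ring,
      norm_mul,
      show (z - z0) ^ (ν + 1) * eval z M = (z - z0) ^ ν * ((z - z0) * eval z M) by ring,
      norm_mul ((z - z0) ^ ν) ((z - z0) * eval z M)] at h1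
    rw [hν]
    exact le_of_mul_le_mul_left (by linarith) hpos
  have t1 : Filter.Tendsto (fun z : ℂ => ‖z * (μ * M.eval z + (z - z0) * M.derivative.eval z)‖)
      (nhdsWithin z0 {z0}ᶜ) (nhds ‖z0 * (μ * M.eval z0 + (z0 - z0) * M.derivative.eval z0)‖) := by
    apply Filter.Tendsto.mono_left _ nhdsWithin_le_nhds
    apply Continuous.tendsto
    fun_prop
  have t2 : Filter.Tendsto (fun z : ℂ => G * ‖(z - z0) * M.eval z‖)
      (nhdsWithin z0 {z0}ᶜ) (nhds (G * ‖(z0 - z0) * M.eval z0‖)) := by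
    apply Filter.Tendsto.mono_left _ nhdsWithin_le_nhds
    apply Continuous.tendsto
    fun_prop
  have hle := le_of_tendsto_of_tendsto t1 t2 (by
    have hev : ∀ᶠ z : ℂ in nhds z0, ‖z‖ < ρ :=
      (continuous_norm.tendsto z0).eventually (gt_mem_nhds hρ)
    filter_upwards [nhdsWithin_le_nhds hev, self_mem_nhdsWithin] with z h1 h2
    exact ineq z h2 h1)
  simp only [sub_self, zero_mul, add_zero, norm_zero, mul_zero] at hle
  have : z0 * (μ * M.eval z0) ≠ 0 :=
    mul_ne_zero hz0 (mul_ne_zero (by exact_mod_cast hμpos.ne') hMz)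
  exact this (norm_le_zero_iff.mp hle)

lemma no_root_real (L : ℝ[X]) (hL : L ≠ 0) (S : PowerSeries ℝ)
    (hS : PowerSeries.X * PowerSeries.derivative ℝ (L : PowerSeries ℝ) = S * (L : PowerSeries ℝ))
    (R : ℝ) (hsum : ∀ ρ, 0 ≤ ρ → ρ < R → Summable fun k => |PowerSeries.coeff k S| * ρ ^ k)
    (z0 : ℂ) (hz0 : z0 ≠ 0) (hR : ‖z0‖ < R) : (L.map (algebraMap ℝ ℂ)).eval z0 ≠ 0 := by
  obtain ⟨ρ, h1, h2⟩ := exists_between hR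
  have hρ0 : 0 ≤ ρ := (norm_nonneg z0).trans h1.le
  apply no_root _ (by simpa using hL) z0 hz0 ρ (∑' k, |PowerSeries.coeff k S| * ρ ^ k) h1
  intro z hz
  have hterm : ∀ k, ‖((PowerSeries.coeff k S : ℝ) : ℂ) * z ^ k‖ ≤ |PowerSeries.coeff k S| * ρ ^ k := by
    intro k
    rw [norm_mul, norm_pow, Complex.norm_real, Real.norm_eq_abs]
    gcongr
  have hs1 : Summable fun k => ‖((PowerSeries.coeff k S : ℝ) : ℂ) * z ^ k‖ :=
    Summable.of_nonneg_of_le (fun _ => norm_nonneg _) hterm (hsum ρ hρ0 h2)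
  have hpoly : ∀ P : ℝ[X], HasSum (fun k => ((P.coeff k : ℝ) : ℂ) * z ^ k)
      ((P.map (algebraMap ℝ ℂ)).eval z) := by
    intro P
    rw [eval_map, eval₂_eq_sum, Polynomial.sum]
    apply hasSum_sum_of_ne_finset_zero
    intro k hk
    rw [Polynomial.notMem_support_iff.mp hk]; simp
  have hs2 : Summable fun k => ‖((L.coeff k : ℝ) : ℂ) * z ^ k‖ := by
    apply summable_of_ne_finset_zero (s := L.support)
    intro k hk
    rw [Polynomial.notMem_support_iff.mp hk]; simp
  have hprod := tsum_mul_tsum_eq_tsum_sum_antidiagonal_of_summable_norm hs1 hs2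
  rw [(hpoly L).tsum_eq] at hprod
  have hcoef : ∀ n, ∑ kl ∈ Finset.HasAntidiagonal.antidiagonal n,
      ((PowerSeries.coeff kl.1 S : ℝ) : ℂ) * z ^ kl.1 * (((L.coeff kl.2 : ℝ) : ℂ) * z ^ kl.2)
      = (((X * derivative L : ℝ[X]).coeff n : ℝ) : ℂ) * z ^ n := by
    intro n
    have h3 : (X * derivative L : ℝ[X]).coeff n
        = ∑ kl ∈ Finset.HasAntidiagonal.antidiagonal n, PowerSeries.coeff kl.1 S * L.coeff kl.2 := by
      have := congrArg (PowerSeries.coeff n) hS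
      rw [PowerSeries.coeff_mul n S] at this
      simp only [coeff_coe] at this
      rw [← this, ← coeff_coe, coe_mul, coe_X]
      congr 2
      rw [PowerSeries.derivative_coe]
    rw [h3]
    push_cast
    rw [Finset.sum_mul]
    apply Finset.sum_congr rfl
    rintro ⟨a, b⟩ hab
    rw [Finset.HasAntidiagonal.mem_antidiagonal] at hab
    simp only at hab ⊢
    rw [← hab, pow_add]; ring
  rw [tsum_congr hcoef, (hpoly _).tsum_eq] at hprod
  simp only [Polynomial.map_mul, map_X, eval_mul, eval_X, ← derivative_map] at hprod
  rw [← hprod, norm_mul]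
  gcongr
  refine (norm_tsum_le_tsum_norm hs1).trans ?_
  exact hs1.tsum_le_tsum hterm (hsum ρ hρ0 h2)

/-- the final analytic inequality -/
lemma analytic_core (q : ℝ) (hq : 1 < q) (N A : ℕ → ℝ) (c C : ℕ) (hA0 : A 0 = 1) (hN0 : N 0 = 0)
    (hrec : ∀ n : ℕ, (n : ℝ) * A n =
      ∑ p ∈ Finset.HasAntidiagonal.antidiagonal n, N p.1 * A p.2)
    (hN : ∀ k, 1 ≤ k → q ^ k - C * Real.sqrt q ^ k ≤ N k)
    (hc : ∀ n, c ≤ n → A (n + 1) = q * A n) (hAc : 0 ≤ A c) :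
    (1 - 1 / Real.sqrt q) ^ c ≤ A c / q ^ c := by
  have hq0 : 0 < q := by linarith
  set s := Real.sqrt q with hs
  have hs1 : 1 < s := by rw [hs, Real.lt_sqrt (by norm_num)]; simpa using hq
  have hs0 : 0 < s := by linarith
  have hsq : s * s = q := Real.mul_self_sqrt hq0.le
  let Ap : PowerSeries ℝ := PowerSeries.mk A
  let Np : PowerSeries ℝ := PowerSeries.mk N
  have hAN : PowerSeries.X * PowerSeries.derivative ℝ Ap = Np * Ap := by
    ext n
    rw [PowerSeries.coeff_mul n Np]
    simp only [Np, Ap, PowerSeries.coeff_mk]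
    rw [← hrec]
    cases n with
    | zero => simp
    | succ m =>
      rw [mul_comm PowerSeries.X, PowerSeries.coeff_succ_mul_X, PowerSeries.coeff_derivative]
      simp only [PowerSeries.coeff_mk]
      push_cast; ring
  let Lp : PowerSeries ℝ := (1 - PowerSeries.C q * PowerSeries.X) * Ap
  have hLc0 : PowerSeries.coeff 0 Lp = 1 := by simp [Lp, Ap, hA0]
  have hLcs : ∀ n, PowerSeries.coeff (n + 1) Lp = A (n + 1) - q * A n := by
    intro n
    simp only [Lp, sub_mul, one_mul, map_sub]
    rw [mul_assoc, PowerSeries.coeff_C_mul, mul_comm PowerSeries.X, PowerSeries.coeff_succ_mul_X]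
    simp [Ap]
  let L : ℝ[X] := PowerSeries.trunc (c + 1) Lp
  have hLL : (L : PowerSeries ℝ) = Lp := by
    ext n
    rw [coeff_coe, PowerSeries.coeff_trunc]
    split_ifs with h
    · rfl
    · obtain ⟨m, rfl⟩ : ∃ m, n = m + 1 := ⟨n - 1, by omega⟩
      rw [hLcs, hc m (by omega)]; ring
  have hdeg : L.natDegree ≤ c := by
    have : L.natDegree < c + 1 := PowerSeries.natDegree_trunc_lt Lp c
    omega
  have hL0 : L.coeff 0 = 1 := by rw [← coeff_coe, hLL, hLc0]
  have hLne : L ≠ 0 := by intro h; rw [h] at hL0; simp at hL0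
  let S : PowerSeries ℝ := Np - (geo q - 1)
  have hLS : PowerSeries.X * PowerSeries.derivative ℝ (L : PowerSeries ℝ)
      = S * (L : PowerSeries ℝ) := by
    rw [hLL]
    have h1 : Ap = geo q * Lp := by
      simp only [Lp]; rw [← mul_assoc, mul_comm (geo q), geo_inv, one_mul]
    have h2 : PowerSeries.derivative ℝ Lp = (1 - PowerSeries.C q * PowerSeries.X) *
        PowerSeries.derivative ℝ Ap - PowerSeries.C q * Ap := by
      simp only [Lp, Derivation.leibniz, smul_eq_mul, map_sub, Derivation.map_one_eq_zero,
        PowerSeries.derivative_C, PowerSeries.derivative_X]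
      ring
    rw [h2]
    have h3 := geo_mul q
    have h4 : Lp = (1 - PowerSeries.C q * PowerSeries.X) * Ap := rfl
    simp only [S]
    linear_combination (1 - PowerSeries.C q * PowerSeries.X) * hAN - Np * h4
      - PowerSeries.C q * PowerSeries.X * h1 - Lp * h3
  have hgp : ∀ i : ℕ, PowerSeries.X * PowerSeries.derivative ℝ (geo s ^ i)
      = (i : PowerSeries ℝ) * (geo s - 1) * geo s ^ i := by
    intro i
    induction i with
    | zero => simp
    | succ i ih =>
      rw [pow_succ, Derivation.leibniz, smul_eq_mul, smul_eq_mul]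
      push_cast
      linear_combination geo s ^ i * geo_deriv s + geo s * ih
  let b : PowerSeries ℝ := S + (C : PowerSeries ℝ) * (geo s - 1)
  have hE : PowerSeries.X * PowerSeries.derivative ℝ ((L : PowerSeries ℝ) * geo s ^ C)
      = b * ((L : PowerSeries ℝ) * geo s ^ C) := by
    rw [Derivation.leibniz, smul_eq_mul, smul_eq_mul]
    simp only [b]
    linear_combination (L : PowerSeries ℝ) * hgp C + geo s ^ C * hLS
  have hCc : ∀ (k : ℕ) (F : PowerSeries ℝ), PowerSeries.coeff k ((C : PowerSeries ℝ) * F)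
      = C * PowerSeries.coeff k F := by
    intro k F
    rw [← nsmul_eq_mul, map_nsmul, nsmul_eq_mul]
  have hScoef : ∀ k, PowerSeries.coeff k b = PowerSeries.coeff k S + C * (if k = 0 then 0 else s ^ k) := by
    intro k
    simp only [b, map_add, hCc, map_sub, geo, PowerSeries.coeff_mk, PowerSeries.coeff_one]
    split_ifs with h
    · subst h; simp
    · simp
  have hSc : ∀ k, PowerSeries.coeff k S = if k = 0 then 0 else N k - q ^ k := by
    intro k
    simp only [S, Np, map_sub, geo, PowerSeries.coeff_mk, PowerSeries.coeff_one]
    split_ifs with h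
    · subst h; simp [hN0]
    · simp
  have hb : ∀ k, 0 ≤ PowerSeries.coeff k b := by
    intro k
    rw [hScoef, hSc]
    split_ifs with h
    · simp
    · have := hN k (by omega); linarith
  have hE0 : PowerSeries.coeff 0 ((L : PowerSeries ℝ) * geo s ^ C) = 1 := by
    rw [PowerSeries.coeff_zero_eq_constantCoeff_apply, map_mul, map_pow,
      ← PowerSeries.coeff_zero_eq_constantCoeff_apply, ← PowerSeries.coeff_zero_eq_constantCoeff_apply,
      coeff_coe, hL0]
    simp [geo]
  have hpn := ps_nonneg _ b hE0 hE hb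
  obtain ⟨A0, hA0', hbd⟩ := poly_coeff_bound L s hs0 C
  have hSb : ∀ k, |PowerSeries.coeff k S| ≤ (A0 + C) * ((k + 1 : ℝ) ^ (C + 1) * s ^ k) := by
    intro k
    have h1 : PowerSeries.coeff k b ≤ A0 * ((k + 1 : ℝ) ^ (C + 1) * s ^ k) := by
      calc _ ≤ _ := (hpn k).2
        _ ≤ (k + 1 : ℝ) * (A0 * (k + 1) ^ C * s ^ k) := by
            apply mul_le_mul (by linarith) ((le_abs_self _).trans (hbd k)) (hpn k).1 (by positivity)
        _ = _ := by ring
    have h2 := hb k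
    have h3 : (C : ℝ) * (if k = 0 then 0 else s ^ k) ≤ C * ((k + 1 : ℝ) ^ (C + 1) * s ^ k) := by
      apply mul_le_mul_of_nonneg_left _ (by positivity)
      split_ifs with h
      · positivity
      · have : (1 : ℝ) ≤ (k + 1 : ℝ) ^ (C + 1) := one_le_pow₀ (by linarith [Nat.cast_nonneg (α := ℝ) k])
        have h5 : 0 < s ^ k := by positivity
        nlinarith
    have h4 : (0 : ℝ) ≤ C * (if k = 0 then 0 else s ^ k) := by
      split_ifs <;> positivity
    have h6 : 0 ≤ A0 * ((k + 1 : ℝ) ^ (C + 1) * s ^ k) := by positivity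
    have h7 := hScoef k
    rw [abs_le]
    constructor <;> nlinarith
  have hsum : ∀ ρ, 0 ≤ ρ → ρ < 1 / s → Summable fun k => |PowerSeries.coeff k S| * ρ ^ k := by
    intro ρ hρ hρs
    have hx : ‖s * ρ‖ < 1 := by
      rw [Real.norm_of_nonneg (by positivity)]
      rw [lt_div_iff₀ hs0] at hρs; linarith
    have h1 : Summable fun k : ℕ => (k + 1 : ℝ) ^ (C + 1) * (s * ρ) ^ k := by
      have h0 := summable_pow_mul_geometric_of_norm_lt_one (R := ℝ) (C + 1) hx
      rcases eq_or_lt_of_le (show 0 ≤ s * ρ by positivity) with h | h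
      · rw [← h]
        apply summable_of_ne_finset_zero (s := {0})
        intro k hk
        simp only [Finset.mem_singleton] at hk
        simp [hk]
      · have := (summable_nat_add_iff 1).mpr h0
        have := this.mul_right (s * ρ)⁻¹
        refine this.congr fun k => ?_
        push_cast
        rw [pow_succ (s * ρ), mul_assoc, mul_assoc, mul_inv_cancel₀ h.ne', mul_one]
    refine Summable.of_nonneg_of_le (fun k => by positivity) (fun k => ?_) (h1.mul_left (A0 + C))
    calc _ ≤ (A0 + C) * ((k + 1 : ℝ) ^ (C + 1) * s ^ k) * ρ ^ k := by gcongr; exact hSb k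
      _ = _ := by rw [mul_pow]; ring
  have hroots := no_root_real L hLne S hLS (1 / s) hsum
  have hLq : L.eval (1 / q) = A c / q ^ c := by
    have : ∀ d, ∑ n ∈ Finset.range (d + 1), PowerSeries.coeff n Lp * (1 / q) ^ n = A d / q ^ d := by
      intro d
      induction d with
      | zero => simp [hLc0, hA0]
      | succ d ih =>
        rw [Finset.sum_range_succ, ih, hLcs, one_div, inv_pow]
        field_simp
        ring
    rw [← this c, eval_eq_sum_range' (n := c + 1) (by omega)]
    apply Finset.sum_congr rfl
    intro n _
    rw [← hLL, coeff_coe]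
  rw [← hLq]
  -- factor over the complex numbers
  let Lc : ℂ[X] := L.map (algebraMap ℝ ℂ)
  have hLc : Lc.Splits := IsAlgClosed.splits Lc
  have hcard : Lc.roots.card ≤ c := (Polynomial.card_roots' Lc).trans (by
    simpa [Lc] using hdeg)
  have hLc0' : Lc.eval 0 = 1 := by
    rw [← Polynomial.coeff_zero_eq_eval_zero]; simp [Lc, hL0]
  have hLcne : Lc ≠ 0 := by intro h; rw [h] at hLc0'; simp at hLc0'
  have hev : ∀ x : ℂ, Lc.eval x = Lc.leadingCoeff * (Lc.roots.map (fun r => x - r)).prod := by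
    intro x
    exact hLc.eval_eq_prod_roots x
  have hx : Lc.eval ((1 / q : ℝ) : ℂ) = (Lc.roots.map (fun r => 1 - ((1 / q : ℝ) : ℂ) / r)).prod := by
    have h0 := hev 0
    rw [hLc0'] at h0
    have hprod : (Lc.roots.map (fun r => ((1 / q : ℝ) : ℂ) - r)).prod
        = (Lc.roots.map (fun r => (0 : ℂ) - r)).prod
          * (Lc.roots.map (fun r => 1 - ((1 / q : ℝ) : ℂ) / r)).prod := by
      rw [← Multiset.prod_map_mul]
      congr 1
      apply Multiset.map_congr rfl
      intro r hr
      have hr0 : r ≠ 0 := by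
        rintro rfl
        have := (Polynomial.mem_roots hLcne).mp hr
        rw [IsRoot, hLc0'] at this; simp at this
      field_simp
      ring
    rw [hev, hprod, ← mul_assoc, ← h0, one_mul]
  have hnorm : ‖Lc.eval ((1 / q : ℝ) : ℂ)‖ ≥ (1 - 1 / s) ^ c := by
    rw [hx]
    have h01 : 0 ≤ 1 - 1 / s := by
      rw [sub_nonneg, div_le_one hs0]; exact hs1.le
    have h11 : 1 - 1 / s ≤ 1 := by
      have : 0 < 1 / s := by positivity
      linarith
    have gen : ∀ m : Multiset ℂ, (∀ r ∈ m, 1 - 1 / s ≤ ‖1 - ((1 / q : ℝ) : ℂ) / r‖) →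
        (1 - 1 / s) ^ m.card ≤ ‖(m.map (fun r => 1 - ((1 / q : ℝ) : ℂ) / r)).prod‖ := by
      intro m
      induction m using Multiset.induction_on with
      | empty => simp
      | cons a m ih =>
        intro h
        rw [Multiset.card_cons, Multiset.map_cons, Multiset.prod_cons, norm_mul, pow_succ, mul_comm]
        apply mul_le_mul (h a (by simp)) (ih fun r hr => h r (by simp [hr])) (by positivity) (by positivity)
    refine le_trans (pow_le_pow_of_le_one h01 h11 hcard) (gen _ ?_)
    intro r hr
    have hr0 : r ≠ 0 := by
      rintro rfl
      have := (Polynomial.mem_roots hLcne).mp hr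
      rw [IsRoot, hLc0'] at this; simp at this
    have hrn : 1 / s ≤ ‖r‖ := by
      by_contra hlt
      push Not at hlt
      exact hroots r hr0 hlt ((Polynomial.mem_roots hLcne).mp hr)
    have h1 : ‖((1 / q : ℝ) : ℂ) / r‖ ≤ 1 / s := by
      rw [norm_div, Complex.norm_real, Real.norm_of_nonneg (by positivity), div_le_iff₀ (norm_pos_iff.mpr hr0)]
      calc 1 / q = 1 / s * (1 / s) := by rw [← hsq]; field_simp
        _ ≤ _ := by gcongr
    have h2 := norm_sub_norm_le (1 : ℂ) (((1 / q : ℝ) : ℂ) / r)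
    rw [norm_one] at h2
    linarith
  have hreal : Lc.eval ((1 / q : ℝ) : ℂ) = ((L.eval (1 / q) : ℝ) : ℂ) := by
    simp only [Lc]
    rw [eval_map, ← Complex.coe_algebraMap, eval₂_at_apply]
  rw [hreal, Complex.norm_real, Real.norm_eq_abs, abs_of_nonneg (by rw [hLq]; positivity)] at hnorm
  exact hnorm

end Drin

namespace Drin

section val
variable {K : Type*} [Field K]

lemma val_int {R : Type*} [CommRing R] [Algebra R K] (x : K)
    (h : ∀ V : ValuationSubring K, (∀ r, algebraMap R K r ∈ V) → x ∈ V) : IsIntegral R x := by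
  have hc : IsIntegrallyClosedIn (integralClosure R K).toSubring K :=
    inferInstanceAs (IsIntegrallyClosedIn (integralClosure R K) K)
  have key := Subring.eq_iInf_of_isIntegrallyClosedIn (R := (integralClosure R K).toSubring)
  have : x ∈ (integralClosure R K).toSubring := by
    rw [key]
    simp only [Subring.mem_iInf]
    intro V
    exact h V.1 (fun r => V.2 (integralClosure R K |>.algebraMap_mem r))
  exact this

variable {k B : Type*} [Field k] [CommRing B] [IsDomain B] [Algebra k B]
  [Algebra B K] [IsFractionRing B K] [Algebra k K] [IsScalarTower k B K]

/-- The degree of an element: dimension of the quotient. -/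
noncomputable def dg (k : Type*) {B : Type*} [Field k] [CommRing B] [Algebra k B] (b : B) : ℕ :=
  Module.finrank k (B ⧸ Ideal.span {b})

/-- Hypotheses on the infinite place. -/
structure Inf (k B : Type*) {K : Type*} [Field K] [Field k] [CommRing B] [IsDomain B] [Algebra k B]
  [Algebra B K] [IsFractionRing B K] [Algebra k K] [IsScalarTower k B K] (V : ValuationSubring K) : Prop where
  hk : ∀ c : k, algebraMap k K c ∈ V
  hu : ∀ v : ValuationSubring K, (∀ c : k, algebraMap k K c ∈ v) → v ≠ V → ∀ b : B, algebraMap B K b ∈ v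
  hV : ∃ b : B, algebraMap B K b ∉ V
  hac : ∀ x : K, IsAlgebraic k x → x ∈ (algebraMap k K).range
  ft : Algebra.FiniteType k B

variable {V : ValuationSubring K}

lemma Inf.const (h : Inf k B V) (b : B) (hb : algebraMap B K b ∈ V) : b ∈ (algebraMap k B).range := by
  have h1 : IsIntegral k (algebraMap B K b) := by
    apply val_int
    intro W hW
    by_cases hWV : W = V
    · rw [hWV]; exact hb
    · exact h.hu W hW hWV b
  obtain ⟨c, hc⟩ := h.hac _ h1.isAlgebraic
  refine ⟨c, ?_⟩
  apply IsFractionRing.injective B K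
  rw [← hc, ← IsScalarTower.algebraMap_apply]

lemma Inf.finite (h : Inf k B V) (f : B) (hf : algebraMap B K f ∉ V) :
    (aeval f : k[X] →ₐ[k] B).toRingHom.Finite := by
  have := h.ft
  letI : Algebra k[X] B := (aeval f : k[X] →ₐ[k] B).toRingHom.toAlgebra
  letI : Algebra k[X] K := ((algebraMap B K).comp (aeval f : k[X] →ₐ[k] B).toRingHom).toAlgebra
  haveI : IsScalarTower k[X] B K := IsScalarTower.of_algebraMap_eq (fun _ => rfl)
  haveI : IsScalarTower k k[X] B := IsScalarTower.of_algebraMap_eq (fun x => by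
    simp [RingHom.algebraMap_toAlgebra])
  haveI : Algebra.FiniteType k[X] B := Algebra.FiniteType.of_restrictScalars_finiteType k k[X] B
  haveI : Algebra.IsIntegral k[X] B := by
    constructor
    intro b
    rw [← isIntegral_algebraMap_iff (A := B) (B := K) (IsFractionRing.injective B K)]
    apply val_int
    intro W hW
    apply h.hu W
    · intro c
      have := hW (C c)
      rw [RingHom.algebraMap_toAlgebra] at this
      simpa [← IsScalarTower.algebraMap_apply] using this
    · rintro rfl
      apply hf
      have := hW X
      rw [RingHom.algebraMap_toAlgebra] at this
      simpa using this
  have := Algebra.IsIntegral.finite (R := k[X]) (A := B)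
  exact this

lemma fin_quot (f : B) (hf : (aeval f : k[X] →ₐ[k] B).toRingHom.Finite) :
    Module.Finite k (B ⧸ Ideal.span {f}) := by
  letI : Algebra k[X] B := (aeval f : k[X] →ₐ[k] B).toRingHom.toAlgebra
  haveI : Module.Finite k[X] B := hf
  obtain ⟨s, hs⟩ := (Module.Finite.fg_top : (⊤ : Submodule k[X] B).FG)
  classical
  refine ⟨⟨s.image (Ideal.Quotient.mk _), ?_⟩⟩
  rw [eq_top_iff]
  rintro y -
  obtain ⟨b, rfl⟩ := Ideal.Quotient.mk_surjective y
  have hb : b ∈ Submodule.span k[X] (s : Set B) := by rw [hs]; trivial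
  induction hb using Submodule.span_induction with
  | mem x hx => exact Submodule.subset_span (by simpa using ⟨x, hx, rfl⟩)
  | zero => simp
  | add x y _ _ h1 h2 => rw [map_add]; exact Submodule.add_mem _ h1 h2
  | smul p x _ h1 =>
    have : Ideal.Quotient.mk (Ideal.span {f}) (p • x) = (p.coeff 0) • Ideal.Quotient.mk (Ideal.span {f}) x := by
      rw [Algebra.smul_def, map_mul, RingHom.algebraMap_toAlgebra]
      simp only [AlgHom.toRingHom_eq_coe, RingHom.coe_coe]
      rw [Algebra.smul_def]
      congr 1
      change Ideal.Quotient.mk (Ideal.span {f}) (aeval f p) = Ideal.Quotient.mk (Ideal.span {f}) (algebraMap k B (p.coeff 0))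
      rw [Ideal.Quotient.eq, Ideal.mem_span_singleton]
      have := Polynomial.X_dvd_sub_C (p := p)
      obtain ⟨r, hr⟩ := this
      refine ⟨aeval f r, ?_⟩
      have := congrArg (aeval f) hr
      simpa using this
    rw [this]
    exact Submodule.smul_mem _ _ h1

lemma Inf.fin (h : Inf k B V) (b : B) (hb : b ≠ 0) : Module.Finite k (B ⧸ Ideal.span {b}) := by
  by_cases hV : algebraMap B K b ∈ V
  · obtain ⟨c, rfl⟩ := h.const b hV
    have hc : c ≠ 0 := by rintro rfl; simp at hb
    have : Ideal.span {algebraMap k B c} = ⊤ := by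
      rw [Ideal.span_singleton_eq_top]
      exact (IsUnit.mk0 c hc).map _
    rw [this]
    infer_instance
  · exact fin_quot b (h.finite b hV)

lemma Inf.dg_mul (h : Inf k B V) (a b : B) (ha : a ≠ 0) (hb : b ≠ 0) : dg k (a * b) = dg k a + dg k b := by
  have := h.fin a ha
  have := h.fin b hb
  have := h.fin (a*b) (mul_ne_zero ha hb)
  have hle : Ideal.span {a*b} ≤ Ideal.span {a} := by
    rw [Ideal.span_singleton_le_span_singleton]; exact dvd_mul_right _ _
  let g : (B ⧸ Ideal.span {a*b}) →ₐ[k] (B ⧸ Ideal.span {a}) := Ideal.Quotient.factorₐ k hle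
  have hg : Function.Surjective g := Ideal.Quotient.factor_surjective hle
  let f0 : B →ₗ[k] (B ⧸ Ideal.span {a*b}) := (Ideal.Quotient.mkₐ k _).toLinearMap ∘ₗ (LinearMap.mulLeft k a)
  have hk : LinearMap.ker f0 = (Ideal.span {b}).restrictScalars k := by
    ext x
    simp only [f0, LinearMap.mem_ker, LinearMap.comp_apply, LinearMap.mulLeft_apply, AlgHom.toLinearMap_apply,
      Ideal.Quotient.mkₐ_eq_mk, Submodule.restrictScalars_mem]
    rw [Ideal.Quotient.eq_zero_iff_mem, Ideal.mem_span_singleton, Ideal.mem_span_singleton, mul_dvd_mul_iff_left ha]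
  have hr : LinearMap.range f0 = LinearMap.ker g.toLinearMap := by
    ext x
    obtain ⟨x, rfl⟩ := Ideal.Quotient.mk_surjective x
    simp only [f0, LinearMap.mem_ker, LinearMap.mem_range, LinearMap.comp_apply, LinearMap.mulLeft_apply, AlgHom.toLinearMap_apply,
      Ideal.Quotient.mkₐ_eq_mk, g]
    change _ ↔ Ideal.Quotient.mk (Ideal.span {a}) x = 0
    rw [Ideal.Quotient.eq_zero_iff_mem, Ideal.mem_span_singleton]
    constructor
    · rintro ⟨y, hy⟩
      rw [Ideal.Quotient.eq, Ideal.mem_span_singleton] at hy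
      have := (dvd_mul_right a b).trans hy
      rw [dvd_sub_right (dvd_mul_right _ _)] at this
      exact this
    · rintro ⟨y, rfl⟩
      exact ⟨y, rfl⟩
  have e1 := LinearMap.finrank_range_add_finrank_ker g.toLinearMap
  have e2 : Module.finrank k (LinearMap.range f0) = dg k b := by
    rw [← (f0.quotKerEquivRange).finrank_eq, hk]
    rfl
  have e3 : Module.finrank k (LinearMap.range g.toLinearMap) = dg k a := by
    rw [LinearMap.range_eq_top.mpr hg, finrank_top]; rfl
  rw [← hr, e2, e3] at e1
  exact e1.symm

lemma Inf.inv_mem (h : Inf k B V) (b : B) (hb : algebraMap B K b ∉ V) : (algebraMap B K b)⁻¹ ∈ V :=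
  (V.mem_or_inv_mem _).resolve_left hb

lemma Inf.not_unit (h : Inf k B V) (b : B) (hb : algebraMap B K b ∉ V) : ¬ IsUnit b := by
  intro hu
  obtain ⟨c, hc⟩ := hu.exists_right_inv
  have h1 : algebraMap B K c = (algebraMap B K b)⁻¹ := by
    apply eq_inv_of_mul_eq_one_right
    rw [← map_mul, hc, map_one]
  have h2 := h.const c (h1 ▸ h.inv_mem b hb)
  obtain ⟨d, rfl⟩ := h2
  have hd : d ≠ 0 := by rintro rfl; simp at hc
  apply hb
  have : b = algebraMap k B d⁻¹ := by
    have : algebraMap k B d⁻¹ * algebraMap k B d = 1 := by rw [← map_mul, inv_mul_cancel₀ hd, map_one]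
    calc b = b * algebraMap k B d * algebraMap k B d⁻¹ := by rw [mul_assoc, mul_comm (algebraMap k B d), this, mul_one]
      _ = _ := by rw [hc, one_mul]
  rw [this, ← IsScalarTower.algebraMap_apply]
  exact h.hk _

lemma Inf.dg_eq_zero (h : Inf k B V) (b : B) (hb : b ≠ 0) : dg k b = 0 ↔ algebraMap B K b ∈ V := by
  have := h.fin b hb
  unfold dg
  rw [Module.finrank_zero_iff, Ideal.Quotient.subsingleton_iff, Ideal.span_singleton_eq_top]
  constructor
  · intro hu
    by_contra hn
    exact h.not_unit b hn hu
  · intro hV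
    obtain ⟨c, rfl⟩ := h.const b hV
    have hc : c ≠ 0 := by rintro rfl; simp at hb
    exact (IsUnit.mk0 c hc).map _

lemma Inf.dg_pow (h : Inf k B V) (a : B) (ha : a ≠ 0) (n : ℕ) : dg k (a ^ n) = n * dg k a := by
  induction n with
  | zero => simpa using (h.dg_eq_zero 1 one_ne_zero).2 (by rw [map_one]; exact V.one_mem)
  | succ n ih => rw [pow_succ, h.dg_mul _ _ (pow_ne_zero _ ha) ha, ih]; ring

/-- pole order at most that of `b`. -/
def W (k : Type*) {B K : Type*} [Field K] [Field k] [CommRing B] [IsDomain B] [Algebra k B]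
  [Algebra B K] [IsFractionRing B K] [Algebra k K] [IsScalarTower k B K] {V : ValuationSubring K}
    (h : Inf k B V) (b : B) : Submodule k B where
  carrier := {x | algebraMap B K x / algebraMap B K b ∈ V}
  add_mem' := by
    intro x y hx hy
    simp only [Set.mem_ofPred_eq, map_add, add_div] at *
    exact V.add_mem _ _ hx hy
  zero_mem' := by simp [V.zero_mem]
  smul_mem' := by
    intro c x hx
    simp only [Set.mem_ofPred_eq] at *
    rw [Algebra.smul_def, map_mul, mul_div_assoc, ← IsScalarTower.algebraMap_apply]
    exact V.mul_mem _ _ (h.hk c) hx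

lemma mem_W (h : Inf k B V) (b x : B) : x ∈ W k h b ↔ algebraMap B K x / algebraMap B K b ∈ V := Iff.rfl

lemma Inf.W_inj (h : Inf k B V) (b : B) (hb : algebraMap B K b ∉ V) (N : ℕ) (x : B) (hx : x ∈ W k h (b ^ N))
    (hd : b ^ (N + 1) ∣ x) : x = 0 := by
  have hb0 : b ≠ 0 := by rintro rfl; apply hb; rw [map_zero]; exact V.zero_mem
  have hb0' : algebraMap B K b ≠ 0 := by simpa using hb0
  obtain ⟨y, rfl⟩ := hd
  rw [mem_W] at hx
  have : algebraMap B K (b ^ (N+1) * y) / algebraMap B K (b ^ N) = algebraMap B K (b * y) := by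
    simp only [map_mul, map_pow, pow_succ]; field_simp
  rw [this] at hx
  by_cases hy : y = 0
  · simp [hy]
  exfalso
  have h0 := (h.dg_eq_zero _ (mul_ne_zero hb0 hy)).2 hx
  rw [h.dg_mul _ _ hb0 hy] at h0
  have := (h.dg_eq_zero b hb0).1 (by omega)
  exact hb this

lemma Inf.W_fin (h : Inf k B V) (b : B) (hb : algebraMap B K b ∉ V) (N : ℕ) :
    Module.Finite k (W k h (b ^ N)) ∧ Module.finrank k (W k h (b ^ N)) ≤ (N + 1) * dg k b := by
  have hb0 : b ≠ 0 := by rintro rfl; apply hb; rw [map_zero]; exact V.zero_mem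
  have := h.fin (b ^ (N+1)) (pow_ne_zero _ hb0)
  let φ : W k h (b ^ N) →ₗ[k] (B ⧸ Ideal.span {b ^ (N+1)}) :=
    (Ideal.Quotient.mkₐ k _).toLinearMap ∘ₗ (W k h (b ^ N)).subtype
  have hφ : Function.Injective φ := by
    rw [injective_iff_map_eq_zero]
    rintro ⟨x, hx⟩ h0
    have h1 : Ideal.Quotient.mk (Ideal.span {b ^ (N+1)}) x = 0 := h0
    rw [Ideal.Quotient.eq_zero_iff_mem, Ideal.mem_span_singleton] at h1
    ext
    exact h.W_inj b hb N x hx h1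
  refine ⟨Module.Finite.of_injective φ hφ, ?_⟩
  rw [← h.dg_pow b hb0]
  exact LinearMap.finrank_le_finrank_of_injective hφ

lemma Inf.bounded (h : Inf k B V) (a : B) (ha : algebraMap B K a ∉ V) (x : B) :
    ∃ C, ∀ N, C ≤ N → x ∈ W k h (a ^ N) := by
  have hi := h.inv_mem a ha
  have ha0 : a ≠ 0 := by rintro rfl; apply ha; rw [map_zero]; exact V.zero_mem
  have ha0' : algebraMap B K a ≠ 0 := by simpa using ha0
  have mono : ∀ (x : K) (C N : ℕ), C ≤ N → x / algebraMap B K a ^ C ∈ V → x / algebraMap B K a ^ N ∈ V := by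
    intro x C N hCN hx
    obtain ⟨d, rfl⟩ := Nat.exists_eq_add_of_le hCN
    have : x / algebraMap B K a ^ (C + d) = x / algebraMap B K a ^ C * ((algebraMap B K a)⁻¹) ^ d := by
      rw [pow_add, inv_pow, div_mul_eq_div_div, div_eq_mul_inv (x / algebraMap B K a ^ C)]
    rw [this]
    exact V.mul_mem _ _ hx (V.toSubring.pow_mem hi d)
  let S : Subring K :=
    { carrier := {x | ∃ C, x / algebraMap B K a ^ C ∈ V}
      mul_mem' := by
        rintro x y ⟨C, hC⟩ ⟨E, hE⟩
        refine ⟨C + E, ?_⟩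
        rw [pow_add, mul_div_mul_comm]
        exact V.mul_mem _ _ hC hE
      one_mem' := ⟨0, by simp [V.one_mem]⟩
      add_mem' := by
        rintro x y ⟨C, hC⟩ ⟨E, hE⟩
        refine ⟨C + E, ?_⟩
        rw [add_div]
        exact V.add_mem _ _ (mono x C _ (by omega) hC) (mono y E _ (by omega) hE)
      zero_mem' := ⟨0, by simp [V.zero_mem]⟩
      neg_mem' := by
        rintro x ⟨C, hC⟩
        refine ⟨C, ?_⟩
        rw [neg_div]
        exact V.neg_mem _ hC }
  have hVS : V.toSubring ≤ S := fun x hx => ⟨0, by simpa using hx⟩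
  let W' := V.ofLE S hVS
  have h1 : W' ≠ V := by
    intro he
    apply ha
    rw [← he]
    exact ⟨1, by simp [ha0', V.one_mem]⟩
  obtain ⟨C, hC⟩ := h.hu W' (fun c => hVS (h.hk c)) h1 x
  refine ⟨C, fun N hN => ?_⟩
  rw [mem_W, map_pow]
  exact mono _ C N hN hC

lemma Inf.dg_le [Finite k] (h : Inf k B V) (a b : B) (hb : b ≠ 0) (hab : algebraMap B K a / algebraMap B K b ∈ V) :
    dg k a ≤ dg k b := by
  have hb0' : algebraMap B K b ≠ 0 := by simpa using hb
  by_cases hbV : algebraMap B K b ∈ V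
  · have haV : algebraMap B K a ∈ V := by
      have := V.mul_mem _ _ hab hbV
      rwa [div_mul_cancel₀ _ hb0'] at this
    by_cases ha : a = 0
    · subst ha
      obtain ⟨x, hx⟩ := h.hV
      by_contra hcon
      have : Module.Finite k (B ⧸ Ideal.span {(0:B)}) := Module.finite_of_finrank_pos (by
        unfold dg at hcon; omega)
      have hfin : Module.Finite k B := by
        have e : (B ⧸ Ideal.span {(0:B)}) ≃ₗ[k] B :=
          (Submodule.quotEquivOfEqBot _ (by simp)).restrictScalars k
        exact Module.Finite.equiv e
      have : IsIntegral k x := Algebra.IsIntegral.isIntegral x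
      obtain ⟨c, hc⟩ := h.hac (algebraMap B K x) (this.algebraMap.isAlgebraic)
      rw [← hc] at hx
      exact hx (h.hk c)
    · rw [(h.dg_eq_zero a ha).2 haV]; omega
  by_cases haV : algebraMap B K a ∈ V
  · by_cases ha : a = 0
    · subst ha
      by_contra hcon
      have : Module.Finite k (B ⧸ Ideal.span {(0:B)}) := Module.finite_of_finrank_pos (by
        unfold dg at hcon; omega)
      have hfin : Module.Finite k B := by
        have e : (B ⧸ Ideal.span {(0:B)}) ≃ₗ[k] B :=
          (Submodule.quotEquivOfEqBot _ (by simp)).restrictScalars k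
        exact Module.Finite.equiv e
      have : IsIntegral k b := Algebra.IsIntegral.isIntegral b
      obtain ⟨c, hc⟩ := h.hac (algebraMap B K b) (this.algebraMap.isAlgebraic)
      rw [← hc] at hbV
      exact hbV (h.hk c)
    · rw [(h.dg_eq_zero a ha).2 haV]; omega
  have ha : a ≠ 0 := by rintro rfl; apply haV; rw [map_zero]; exact V.zero_mem
  have hfa := h.fin a ha
  have hi := h.inv_mem a haV
  have hfin : Finite (B ⧸ Ideal.span {a}) := Module.finite_of_finite k
  choose C hC using h.bounded a haV
  obtain ⟨C0, hC0⟩ : ∃ C0, ∀ y : B ⧸ Ideal.span {a}, C (Quotient.out y) ≤ C0 := by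
    obtain ⟨C0, hC0⟩ := (Set.finite_range (fun y : B ⧸ Ideal.span {a} => C (Quotient.out y))).bddAbove
    exact ⟨C0, fun y => hC0 ⟨y, rfl⟩⟩
  have hrep : ∀ x : B, ∃ w, (∀ N, C0 ≤ N → w ∈ W k h (a ^ N)) ∧ a ∣ x - w := by
    intro x
    refine ⟨Quotient.out (Ideal.Quotient.mk (Ideal.span {a}) x), fun N hN => hC _ N ((hC0 _).trans hN), ?_⟩
    rw [← Ideal.mem_span_singleton, ← Ideal.Quotient.eq]
    exact (Quotient.out_eq _).symm
  have hsurj : ∀ s : ℕ, ∀ x : B, ∃ w ∈ W k h (a ^ (C0 + s)), a ^ (s + 1) ∣ x - w := by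
    intro s
    induction s with
    | zero =>
      intro x
      obtain ⟨w, hw, hd⟩ := hrep x
      exact ⟨w, hw _ le_rfl, by simpa using hd⟩
    | succ s ih =>
      intro x
      obtain ⟨w, hw, ⟨y, hy⟩⟩ := hrep x
      obtain ⟨w', hw', ⟨z, hz⟩⟩ := ih y
      refine ⟨w + a * w', ?_, ⟨z, ?_⟩⟩
      · apply Submodule.add_mem _ (hw _ (by omega))
        rw [mem_W] at hw' ⊢
        convert hw' using 1
        have : algebraMap B K a ≠ 0 := by simpa using ha
        simp only [map_mul, map_pow, ← add_assoc]
        rw [pow_succ]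
        field_simp
      · linear_combination hy + a * hz
  have hmono : ∀ N, W k h (a ^ N) ≤ W k h (b ^ N) := by
    intro N x hx
    rw [mem_W] at hx ⊢
    have := V.mul_mem _ _ hx (V.toSubring.pow_mem hab N)
    convert this using 1
    have : algebraMap B K a ≠ 0 := by simpa using ha
    simp only [map_pow, div_pow]
    field_simp
  have key : ∀ s, (s + 1) * dg k a ≤ (C0 + s + 1) * dg k b := by
    intro s
    obtain ⟨hf1, hf2⟩ := h.W_fin b hbV (C0 + s)
    refine le_trans ?_ hf2
    rw [← h.dg_pow a ha]
    let φ : W k h (b ^ (C0+s)) →ₗ[k] (B ⧸ Ideal.span {a ^ (s+1)}) :=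
      (Ideal.Quotient.mkₐ k _).toLinearMap ∘ₗ (W k h (b ^ (C0+s))).subtype
    have hφ : Function.Surjective φ := by
      intro y
      obtain ⟨x, rfl⟩ := Ideal.Quotient.mk_surjective y
      obtain ⟨w, hw, hd⟩ := hsurj s x
      refine ⟨⟨w, hmono _ hw⟩, ?_⟩
      change Ideal.Quotient.mk _ w = _
      rw [eq_comm, Ideal.Quotient.eq, Ideal.mem_span_singleton]
      exact hd
    exact LinearMap.finrank_le_finrank_of_surjective hφ
  by_contra hcon
  push Not at hcon
  have h1 := key (C0 * dg k b)
  have h2 := Nat.mul_le_mul_left (C0 * dg k b + 1) hcon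
  nlinarith

lemma Inf.dg_zero [Finite k] (h : Inf k B V) : dg k (0 : B) = 0 := by
  have := h.dg_le 0 1 one_ne_zero (by simp [V.zero_mem])
  have h1 : dg k (1:B) = 0 := (h.dg_eq_zero 1 one_ne_zero).2 (by rw [map_one]; exact V.one_mem)
  omega

lemma Inf.dg_add [Finite k] (h : Inf k B V) (a b : B) : dg k (a + b) ≤ max (dg k a) (dg k b) := by
  by_cases ha : a = 0
  · simp [ha]
  by_cases hb : b = 0
  · simp [hb]
  have ha' : algebraMap B K a ≠ 0 := by simpa using ha
  have hb' : algebraMap B K b ≠ 0 := by simpa using hb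
  rcases V.mem_or_inv_mem (algebraMap B K a / algebraMap B K b) with h1 | h1
  · refine le_max_of_le_right (h.dg_le _ _ hb ?_)
    rw [map_add, add_div, div_self hb']
    exact V.add_mem _ _ h1 V.one_mem
  · refine le_max_of_le_left (h.dg_le _ _ ha ?_)
    rw [inv_div] at h1
    rw [map_add, add_div, div_self ha']
    exact V.add_mem _ _ V.one_mem h1

/-- All the properties of the degree function. -/
structure DegData (k B : Type*) [Field k] [CommRing B] [IsDomain B] [Algebra k B] : Prop where
  zero : dg k (0:B) = 0
  mul : ∀ a b : B, a ≠ 0 → b ≠ 0 → dg k (a * b) = dg k a + dg k b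
  add : ∀ a b : B, dg k (a + b) ≤ max (dg k a) (dg k b)
  const : ∀ b : B, dg k b = 0 ↔ b ∈ (algebraMap k B).range
  fin : ∀ b : B, b ≠ 0 → Module.Finite k (B ⧸ Ideal.span {b})
  fin' : ∀ b : B, 0 < dg k b → (aeval b : k[X] →ₐ[k] B).toRingHom.Finite
  pos : ∃ b : B, 0 < dg k b
  ft : Algebra.FiniteType k B

lemma Inf.const_iff [Finite k] (h : Inf k B V) (b : B) : dg k b = 0 ↔ b ∈ (algebraMap k B).range := by
  by_cases hb : b = 0
  · subst hb
    simp [h.dg_zero]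
  rw [h.dg_eq_zero b hb]
  refine ⟨h.const b, ?_⟩
  rintro ⟨c, rfl⟩
  rw [← IsScalarTower.algebraMap_apply]
  exact h.hk c

lemma Inf.degData [Finite k] (h : Inf k B V) : DegData k B where
  zero := h.dg_zero
  mul := h.dg_mul
  add := h.dg_add
  const := h.const_iff
  fin := h.fin
  ft := h.ft
  fin' := fun b hb => h.finite b (fun hV => by
    have := h.const_iff b |>.2 (h.const b hV)
    omega)
  pos := by
    obtain ⟨b, hb⟩ := h.hV
    refine ⟨b, Nat.pos_of_ne_zero fun h0 => hb ?_⟩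
    refine (h.dg_eq_zero b ?_).1 h0
    rintro rfl
    rw [map_zero] at hb
    exact hb V.zero_mem

end val
end Drin

namespace Drin
section basic
variable {k B : Type*} [Field k] [CommRing B] [IsDomain B] [Algebra k B]

namespace DegData

lemma dg_one (h : DegData k B) : dg k (1:B) = 0 := (h.const 1).2 ⟨1, map_one _⟩

lemma dg_algebraMap (h : DegData k B) (c : k) : dg k (algebraMap k B c) = 0 := (h.const _).2 ⟨c, rfl⟩

lemma dg_pow (h : DegData k B) (a : B) (n : ℕ) : dg k (a ^ n) = n * dg k a := by
  induction n with
  | zero => simp [h.dg_one]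
  | succ n ih =>
    by_cases ha : a = 0
    · simp [ha, h.zero]
    · rw [pow_succ, h.mul _ _ (pow_ne_zero _ ha) ha, ih]; ring

lemma mul_le (h : DegData k B) (a b : B) : dg k (a * b) ≤ dg k a + dg k b := by
  by_cases ha : a = 0
  · simp [ha, h.zero]
  by_cases hb : b = 0
  · simp [hb, h.zero]
  exact (h.mul a b ha hb).le

lemma dg_smul (h : DegData k B) (c : k) (hc : c ≠ 0) (b : B) : dg k (c • b) = dg k b := by
  by_cases hb : b = 0
  · simp [hb]
  rw [Algebra.smul_def, h.mul _ _ _ hb, h.dg_algebraMap, zero_add]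
  simpa using hc

lemma dg_smul_le (h : DegData k B) (c : k) (b : B) : dg k (c • b) ≤ dg k b := by
  by_cases hc : c = 0
  · simp [hc, h.zero]
  exact (h.dg_smul c hc b).le

lemma dg_neg (h : DegData k B) (b : B) : dg k (-b) = dg k b := by
  have := h.dg_smul (-1) (by simp) b
  simpa using this

lemma dg_sub (h : DegData k B) (a b : B) : dg k (a - b) ≤ max (dg k a) (dg k b) := by
  rw [sub_eq_add_neg, ← h.dg_neg b]; exact h.add _ _

lemma dg_add_eq (h : DegData k B) (a b : B) (hab : dg k b < dg k a) : dg k (a + b) = dg k a := by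
  apply le_antisymm
  · exact (h.add a b).trans (by simp [hab.le])
  · have := h.dg_sub (a + b) b
    rw [add_sub_cancel_right] at this
    rcases le_max_iff.1 this with h1 | h1
    · exact h1
    · omega

lemma dg_sum_le (h : DegData k B) {ι : Type*} (s : Finset ι) (g : ι → B) (n : ℕ) (hn : ∀ i ∈ s, dg k (g i) ≤ n) :
    dg k (∑ i ∈ s, g i) ≤ n := by
  classical
  induction s using Finset.induction_on with
  | empty => simp [h.zero]
  | insert a s ha ih =>
    rw [Finset.sum_insert ha]
    refine (h.add _ _).trans (max_le (hn _ (Finset.mem_insert_self _ _)) (ih fun i hi => hn i (Finset.mem_insert_of_mem hi)))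

lemma dvd_le (h : DegData k B) (a b : B) (hb : b ≠ 0) (hab : a ∣ b) : dg k a ≤ dg k b := by
  obtain ⟨c, rfl⟩ := hab
  rw [h.mul _ _ (left_ne_zero_of_mul hb) (right_ne_zero_of_mul hb)]; omega

lemma ne_zero_of_pos (h : DegData k B) (a : B) (ha : 0 < dg k a) : a ≠ 0 := by
  rintro rfl; rw [h.zero] at ha; omega

lemma isUnit_iff (h : DegData k B) (a : B) (ha : a ≠ 0) : IsUnit a ↔ dg k a = 0 := by
  constructor
  · rintro hu
    have := h.dvd_le a 1 one_ne_zero hu.dvd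
    rw [h.dg_one] at this; omega
  · intro h0
    obtain ⟨c, rfl⟩ := (h.const a).1 h0
    have : c ≠ 0 := by rintro rfl; simp at ha
    exact (IsUnit.mk0 c this).map _

lemma dg_associated (h : DegData k B) (a b : B) (hab : Associated a b) : dg k a = dg k b := by
  by_cases ha : a = 0
  · subst ha; rw [associated_zero_iff_eq_zero _ |>.1 hab.symm]
  have hb : b ≠ 0 := by rintro rfl; exact ha (associated_zero_iff_eq_zero _ |>.1 hab)
  exact le_antisymm (h.dvd_le _ _ hb hab.dvd) (h.dvd_le _ _ ha hab.symm.dvd)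

lemma dg_aeval_le (h : DegData k B) (f : B) (p : k[X]) : dg k (aeval f p) ≤ p.natDegree * dg k f := by
  rw [aeval_eq_sum_range]
  apply h.dg_sum_le
  intro i hi
  rw [Finset.mem_range] at hi
  refine (h.dg_smul_le _ _).trans ?_
  rw [h.dg_pow]
  exact Nat.mul_le_mul_right _ (by omega)

lemma dg_aeval (h : DegData k B) (f : B) (hf : 0 < dg k f) (p : k[X]) (hp : p ≠ 0) :
    aeval f p ≠ 0 ∧ dg k (aeval f p) = p.natDegree * dg k f := by
  rcases Nat.eq_zero_or_pos p.natDegree with h0 | h0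
  · rw [h0, zero_mul]
    rw [Polynomial.eq_C_of_natDegree_eq_zero h0] at hp ⊢
    rw [aeval_C]
    refine ⟨?_, h.dg_algebraMap _⟩
    simp at hp
    simpa using hp
  · have key : dg k (aeval f p) = p.natDegree * dg k f := by
      have e1 : dg k (aeval f (C p.leadingCoeff * X ^ p.natDegree)) = p.natDegree * dg k f := by
        rw [map_mul, aeval_C, ← Algebra.smul_def, map_pow, aeval_X, h.dg_smul _ (by simpa using hp), h.dg_pow]
      have e2 : dg k (aeval f p.eraseLead) < p.natDegree * dg k f := by
        refine (h.dg_aeval_le _ _).trans_lt ?_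
        exact Nat.mul_lt_mul_of_pos_right (by have := p.eraseLead_natDegree_le; omega) hf
      have := h.dg_add_eq _ _ (e1 ▸ e2)
      rw [← map_add, add_comm, eraseLead_add_C_mul_X_pow, e1] at this
      exact this
    refine ⟨?_, key⟩
    apply h.ne_zero_of_pos
    rw [key]; positivity

/-- Elements of degree at most `n`. -/
def Le (h : DegData k B) (n : ℕ) : Submodule k B where
  carrier := {b | dg k b ≤ n}
  add_mem' := fun {a b} ha hb => (h.add a b).trans (max_le ha hb)
  zero_mem' := by simp [h.zero]
  smul_mem' := fun c b hb => (h.dg_smul_le c b).trans hb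

lemma mem_Le (h : DegData k B) (n : ℕ) (b : B) : b ∈ h.Le n ↔ dg k b ≤ n := Iff.rfl

lemma Le_fin (h : DegData k B) (f : B) (hf : 0 < dg k f) (n : ℕ) :
    Module.Finite k (h.Le n) ∧ Module.finrank k (h.Le n) ≤ n + dg k f := by
  have hf0 := h.ne_zero_of_pos f hf
  set N := n / dg k f + 1
  have hN : n < N * dg k f := by
    have := Nat.lt_div_mul_add (a := n) hf
    simp only [N, add_mul]; omega
  have hN' : N * dg k f ≤ n + dg k f := by
    have := Nat.div_mul_le_self n (dg k f)
    simp only [N, add_mul]; omega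
  have := h.fin (f ^ N) (pow_ne_zero _ hf0)
  let φ : h.Le n →ₗ[k] (B ⧸ Ideal.span {f ^ N}) :=
    (Ideal.Quotient.mkₐ k _).toLinearMap ∘ₗ (h.Le n).subtype
  have hφ : Function.Injective φ := by
    rw [injective_iff_map_eq_zero]
    rintro ⟨x, hx⟩ h0
    have h1 : Ideal.Quotient.mk (Ideal.span {f ^ N}) x = 0 := h0
    rw [Ideal.Quotient.eq_zero_iff_mem, Ideal.mem_span_singleton] at h1
    ext
    by_contra hx0
    have := h.dvd_le _ x hx0 h1
    rw [h.dg_pow] at this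
    rw [mem_Le] at hx
    omega
  refine ⟨Module.Finite.of_injective φ hφ, ?_⟩
  refine (LinearMap.finrank_le_finrank_of_injective hφ).trans ?_
  change dg k (f ^ N) ≤ _
  rw [h.dg_pow]; exact hN'

end DegData

/-- The k[X]-algebra structure given by `f`. -/
noncomputable abbrev algX (k : Type*) {B : Type*} [Field k] [CommRing B] [Algebra k B] (f : B) : Algebra k[X] B :=
  (aeval f : k[X] →ₐ[k] B).toRingHom.toAlgebra

lemma algX_tower (f : B) : letI := algX k f; IsScalarTower k k[X] B := by
  letI := algX k f
  exact IsScalarTower.of_algebraMap_eq (fun x => by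
    simp [RingHom.algebraMap_toAlgebra])

lemma algX_faithful (h : DegData k B) (f : B) (hf : 0 < dg k f) : letI := algX k f; FaithfulSMul k[X] B := by
  letI := algX k f
  rw [faithfulSMul_iff_algebraMap_injective, injective_iff_map_eq_zero]
  intro p hp
  by_contra hp0
  exact (h.dg_aeval f hf p hp0).1 hp

end basic

section sep
open KaehlerDifferential
attribute [local instance] FractionRing.liftAlgebra
variable {k B : Type*} [Field k] [CommRing B] [IsDomain B] [Algebra k B]

lemma sep_of_span [Algebra k[X] B] [IsScalarTower k k[X] B] [FaithfulSMul k[X] B] [Module.Finite k[X] B]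
    (hs : ∀ ω : Ω[(FractionRing B)⁄k], ∃ c : FractionRing B,
      ω = c • D k (FractionRing B) (algebraMap B (FractionRing B) (algebraMap k[X] B X))) :
    Algebra.IsSeparable (FractionRing k[X]) (FractionRing B) := by
  have : Subsingleton Ω[(FractionRing B)⁄(FractionRing k[X])] := by
    refine subsingleton_of_forall_eq 0 fun ω => ?_
    obtain ⟨ω', rfl⟩ := map_surjective k (FractionRing k[X]) (FractionRing B) ω
    obtain ⟨c, rfl⟩ := hs ω'
    rw [map_smul, map_D]
    have : algebraMap (FractionRing B) (FractionRing B) (algebraMap B (FractionRing B) (algebraMap k[X] B X)) =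
      algebraMap (FractionRing k[X]) (FractionRing B) (algebraMap k[X] (FractionRing k[X]) X) := by
      
      rw [← IsScalarTower.algebraMap_apply k[X] (FractionRing k[X]) (FractionRing B)]
      rw [IsScalarTower.algebraMap_apply k[X] B (FractionRing B)]; rfl
    rw [this, Derivation.map_algebraMap, smul_zero]
  have : Algebra.FormallyUnramified (FractionRing k[X]) (FractionRing B) := ⟨this⟩
  exact Algebra.FormallyUnramified.isSeparable _ _

lemma exists_sep [Finite k] (h : DegData k B) : ∃ f : B, D k (FractionRing B) (algebraMap B (FractionRing B) f) ≠ 0 ∧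
    (∀ ω : Ω[(FractionRing B)⁄k], ∃ c : FractionRing B,
      ω = c • D k (FractionRing B) (algebraMap B (FractionRing B) f)) := by
  obtain ⟨f0, hf0⟩ := h.pos
  have := h.ft
  letI := algX k f0
  haveI : IsScalarTower k k[X] B := algX_tower f0
  haveI : FaithfulSMul k[X] B := algX_faithful h f0 hf0
  haveI : Module.Finite k[X] B := h.fin' f0 hf0
  haveI : Algebra.IsAlgebraic k[X] (FractionRing k[X]) := 
    IsLocalization.isAlgebraic (FractionRing k[X]) (nonZeroDivisors k[X])
  haveI : Algebra.IsAlgebraic k[X] (FractionRing B) := Algebra.IsAlgebraic.trans k[X] (FractionRing k[X]) (FractionRing B)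
  haveI : FaithfulSMul k[X] (FractionRing B) := inferInstance
  haveI : PerfectField k := inferInstance
  have htr := _root_.lift_trdeg_add_eq k k[X] (FractionRing B)
  obtain ⟨s, hs, hsep⟩ := exists_isTranscendenceBasis_and_isSeparable_of_perfectField k (FractionRing B)
  have hcard : s.card = 1 := by
    rw [_root_.trdeg_eq_zero (R := k[X]), Polynomial.trdeg_of_isDomain] at htr
    have := hs.cardinalMk_eq_trdeg
    rw [← this] at htr
    simp at htr
    exact_mod_cast htr.symm
  obtain ⟨x, rfl⟩ := Finset.card_eq_one.1 hcard
  have hspan : ∀ ω : Ω[(FractionRing B)⁄k], ∃ c : FractionRing B, c • D k (FractionRing B) x = ω := by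
    intro ω
    rw [← Submodule.mem_span_singleton]
    set F := IntermediateField.adjoin k (({x} : Finset (FractionRing B)) : Set (FractionRing B))
    have h1 : Subsingleton Ω[(FractionRing B)⁄F] :=
      (Algebra.FormallyUnramified.of_isSeparable F (FractionRing B)).subsingleton_kaehlerDifferential
    have h2 : ω ∈ LinearMap.ker (map k F (FractionRing B) (FractionRing B)) := by
      rw [LinearMap.mem_ker]; exact Subsingleton.elim _ _
    rw [← range_mapBaseChange] at h2
    obtain ⟨t, rfl⟩ := h2
    induction t using TensorProduct.induction_on with
    | zero => simp
    | add a b ha hb => rw [map_add]; exact Submodule.add_mem _ ha hb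
    | tmul b ω =>
      rw [mapBaseChange_tmul]
      apply Submodule.smul_mem
      have : ω ∈ Submodule.span F (Set.range (D k F)) := by rw [span_range_derivation]; trivial
      induction this using Submodule.span_induction with
      | zero => simp
      | add a b _ _ ha hb => rw [map_add]; exact Submodule.add_mem _ ha hb
      | smul c a _ ha =>
        rw [map_smul, algebra_compatible_smul (FractionRing B)]
        exact Submodule.smul_mem _ _ ha
      | mem ω hω =>
        obtain ⟨⟨y, hy⟩, rfl⟩ := hω
        rw [map_D]
        change D k (FractionRing B) y ∈ _
        induction hy using IntermediateField.adjoin_induction with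
        | mem y hy => simp at hy; subst hy; exact Submodule.mem_span_singleton_self _
        | algebraMap c => rw [Derivation.map_algebraMap]; exact Submodule.zero_mem _
        | add a b _ _ ha hb => rw [map_add]; exact Submodule.add_mem _ ha hb
        | inv a _ ha => rw [Derivation.leibniz_inv]; exact Submodule.smul_mem _ _ ha
        | mul a b _ _ ha hb =>
          rw [Derivation.leibniz]
          exact Submodule.add_mem _ (Submodule.smul_mem _ _ hb) (Submodule.smul_mem _ _ ha)
  have hex : ∃ f : B, D k (FractionRing B) (algebraMap B (FractionRing B) f) ≠ 0 := by
    by_contra hcon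
    push Not at hcon
    have h1 : ∀ y, D k (FractionRing B) y = 0 := by
      intro y
      obtain ⟨a, b, hb, rfl⟩ := IsFractionRing.div_surjective (A := B) y
      rw [Derivation.leibniz_div, hcon, hcon]; simp
    have : Subsingleton Ω[(FractionRing B)⁄k] := by
      refine subsingleton_of_forall_eq 0 fun ω => ?_
      obtain ⟨c, rfl⟩ := hspan ω
      rw [h1, smul_zero]
    have : Algebra.FormallyUnramified k (FractionRing B) := ⟨this⟩
    have := Algebra.FormallyUnramified.isSeparable k (FractionRing B)
    have h2 : IsAlgebraic k (algebraMap B (FractionRing B) f0) := Algebra.IsAlgebraic.isAlgebraic _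
    obtain ⟨p, hp, hp0⟩ := h2
    rw [aeval_algebraMap_apply] at hp0
    exact (h.dg_aeval f0 hf0 p hp).1 (IsFractionRing.injective B (FractionRing B) (by rw [hp0, map_zero]))
  obtain ⟨f, hf⟩ := hex
  refine ⟨f, hf, fun ω => ?_⟩
  obtain ⟨c, rfl⟩ := hspan ω
  obtain ⟨e, he⟩ := hspan (D k (FractionRing B) (algebraMap B (FractionRing B) f))
  have he0 : e ≠ 0 := by rintro rfl; rw [zero_smul] at he; exact hf he.symm
  refine ⟨c * e⁻¹, ?_⟩
  rw [← he, smul_smul, mul_assoc, inv_mul_cancel₀ he0, mul_one]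

lemma exists_deriv (h : DegData k B) (f : B) (hf : D k (FractionRing B) (algebraMap B (FractionRing B) f) ≠ 0) :
    ∃ δ : Derivation k B B, δ f ≠ 0 := by
  have := h.ft
  obtain ⟨l, hl⟩ : ∃ l : Module.Dual (FractionRing B) Ω[(FractionRing B)⁄k],
      l (D k (FractionRing B) (algebraMap B (FractionRing B) f)) ≠ 0 := by
    by_contra hcon
    push Not at hcon
    exact hf ((Module.forall_dual_apply_eq_zero_iff (FractionRing B) _).1 hcon)
  let Dl : Derivation k (FractionRing B) (FractionRing B) := l.compDer (D k (FractionRing B))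
  obtain ⟨S, hS⟩ := (Algebra.FiniteType.out : (⊤ : Subalgebra k B).FG)
  classical
  obtain ⟨⟨c, hc0⟩, hc⟩ := IsLocalization.exist_integer_multiples_of_finset (nonZeroDivisors B)
    (S.image fun b => Dl (algebraMap B (FractionRing B) b))
  have hall : ∀ b : B, ∃ y : B, algebraMap B (FractionRing B) y =
      algebraMap B (FractionRing B) c * Dl (algebraMap B (FractionRing B) b) := by
    intro b
    have hb : b ∈ Algebra.adjoin k (S : Set B) := by rw [hS]; trivial
    induction hb using Algebra.adjoin_induction with
    | mem x hx =>
      obtain ⟨y, hy⟩ := hc _ (Finset.mem_image_of_mem _ hx)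
      refine ⟨y, ?_⟩
      rw [hy, Algebra.smul_def]
    | algebraMap r =>
      refine ⟨0, ?_⟩
      rw [← IsScalarTower.algebraMap_apply, Derivation.map_algebraMap]; simp
    | add x y _ _ hx hy =>
      obtain ⟨u, hu⟩ := hx
      obtain ⟨v, hv⟩ := hy
      refine ⟨u + v, ?_⟩
      simp only [map_add, hu, hv]; ring
    | mul x y _ _ hx hy =>
      obtain ⟨u, hu⟩ := hx
      obtain ⟨v, hv⟩ := hy
      refine ⟨x * v + y * u, ?_⟩
      simp only [map_add, map_mul, hu, hv, Derivation.leibniz, smul_eq_mul]; ring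
  choose δ hδ using hall
  have inj := IsFractionRing.injective B (FractionRing B)
  refine ⟨Derivation.mk' ⟨⟨δ, ?_⟩, ?_⟩ ?_, ?_⟩
  · intro x y
    apply inj
    simp only [map_add, hδ]; ring
  · intro r x
    apply inj
    simp only [RingHom.id_apply, hδ, Algebra.smul_def, map_mul]
    rw [← IsScalarTower.algebraMap_apply k B (FractionRing B), Derivation.leibniz, Derivation.map_algebraMap]
    simp only [smul_eq_mul, mul_zero, add_zero]; ring
  · intro x y
    apply inj
    simp only [LinearMap.coe_mk, AddHom.coe_mk, hδ, smul_eq_mul, map_mul, map_add, Derivation.leibniz]; ring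
  · intro h0
    have h1 : δ f = 0 := h0
    have h2 := hδ f
    rw [h1, map_zero] at h2
    rcases mul_eq_zero.1 h2.symm with h3 | h3
    · exact nonZeroDivisors.ne_zero hc0 (inj (by rw [h3, map_zero]))
    · exact hl h3

end sep
end Drin

namespace Drin
section frame
open KaehlerDifferential
open scoped IntermediateField
attribute [local instance] FractionRing.liftAlgebra
variable {k B : Type*} [Field k] [CommRing B] [IsDomain B] [Algebra k B]

structure Frame (k : Type*) {B : Type*} [Field k] [CommRing B] [IsDomain B] [Algebra k B]
    (f θ c : B) (P : k[X][X]) (P1 : B[X]) : Prop where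
  pos : 0 < dg k f
  indep : ∀ U : k[X][X], U.natDegree < dg k f →
    eval₂ (aeval f : k[X] →ₐ[k] B).toRingHom θ U = 0 → U = 0
  cne : c ≠ 0
  cover : ∀ b : B, ∃ U : k[X][X], U.natDegree < dg k f ∧
    c * b = eval₂ (aeval f : k[X] →ₐ[k] B).toRingHom θ U
  P1mon : P1.Monic
  P1deg : P1.natDegree + 1 = dg k f
  fact : P.map (aeval f : k[X] →ₐ[k] B).toRingHom = (X - C θ) * P1

lemma finrank_eq_dg [Algebra k[X] B] [IsScalarTower k k[X] B] [FaithfulSMul k[X] B] [Module.Finite k[X] B] :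
    Module.finrank (FractionRing k[X]) (FractionRing B) = dg k (algebraMap k[X] B X) := by
  let p : Ideal k[X] := Ideal.span {X - C 0}
  haveI hp : p.IsMaximal := by
    apply PrincipalIdealRing.isMaximal_of_irreducible
    exact irreducible_X_sub_C 0
  letI : Field (k[X] ⧸ p) := Ideal.Quotient.field p
  have h1 := Ideal.finrank_quotient_map (S := B) p (FractionRing k[X]) (FractionRing B)
  rw [← h1]
  have hmap : Ideal.map (algebraMap k[X] B) p = Ideal.span {algebraMap k[X] B X} := by
    simp [p, Ideal.map_span]
  unfold dg
  haveI : IsScalarTower k (k[X] ⧸ p) (B ⧸ Ideal.map (algebraMap k[X] B) p) := by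
    refine IsScalarTower.of_algebraMap_eq fun x => ?_
    change Ideal.Quotient.mk _ (algebraMap k B x) = Ideal.Quotient.mk _ (algebraMap k[X] B (algebraMap k k[X] x))
    rw [← IsScalarTower.algebraMap_apply]
  have h2 := Module.finrank_mul_finrank k (k[X] ⧸ p) (B ⧸ Ideal.map (algebraMap k[X] B) p)
  have h3 : Module.finrank k (k[X] ⧸ p) = 1 := by
    rw [(quotientSpanXSubCAlgEquiv (0:k)).toLinearEquiv.finrank_eq]
    simp
  rw [h3, one_mul] at h2
  rw [h2]
  rw [hmap]

lemma exists_frame [Finite k] [IsIntegrallyClosed B] (h : DegData k B) :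
    ∃ (f θ c : B) (P : k[X][X]) (P1 : B[X]) (δ : Derivation k B B), Frame k f θ c P P1 ∧ δ f ≠ 0 := by
  obtain ⟨f, hDf, hspan⟩ := exists_sep h
  obtain ⟨δ, hδ⟩ := exists_deriv h f hDf
  have hf : 0 < dg k f := by
    rw [Nat.pos_iff_ne_zero]
    intro h0
    obtain ⟨x, rfl⟩ := (h.const f).1 h0
    simp at hδ
  letI := algX k f
  haveI : IsScalarTower k k[X] B := algX_tower f
  haveI : FaithfulSMul k[X] B := algX_faithful h f hf
  haveI : Module.Finite k[X] B := h.fin' f hf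
  have hX : algebraMap k[X] B X = f := by simp [RingHom.algebraMap_toAlgebra]
  haveI : Algebra.IsAlgebraic k[X] (FractionRing k[X]) := 
    IsLocalization.isAlgebraic (FractionRing k[X]) (nonZeroDivisors k[X])
  haveI : Algebra.IsAlgebraic k[X] (FractionRing B) := Algebra.IsAlgebraic.trans k[X] (FractionRing k[X]) (FractionRing B)
  haveI : Algebra.IsSeparable (FractionRing k[X]) (FractionRing B) := sep_of_span (by rw [hX]; exact hspan)
  have hD := finrank_eq_dg (k := k) (B := B)
  rw [hX] at hD
  set E := FractionRing k[X]
  set K := FractionRing B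
  obtain ⟨α, hα⟩ := Field.exists_primitive_element E K
  obtain ⟨y, hy0, hy⟩ := (Algebra.IsAlgebraic.isAlgebraic (R := k[X]) α).exists_integral_multiple
  haveI : Algebra.IsIntegral k[X] B := inferInstance
  have hyB : IsIntegral B (y • α) := hy.tower_top
  obtain ⟨θ, hθ⟩ := IsIntegrallyClosed.isIntegral_iff.1 hyB
  have htop : E⟮algebraMap B K θ⟯ = ⊤ := by
    rw [eq_top_iff, ← hα, IntermediateField.adjoin_simple_le_iff]
    have hm : algebraMap B K θ ∈ E⟮algebraMap B K θ⟯ := IntermediateField.mem_adjoin_simple_self _ _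
    have h2 := (E⟮algebraMap B K θ⟯).smul_mem hm (x := (algebraMap k[X] E y)⁻¹)
    have h3 : (algebraMap k[X] E y)⁻¹ • (algebraMap B K θ) = α := by
      rw [hθ, algebra_compatible_smul E y, smul_smul, inv_mul_cancel₀ _, one_smul]
      simpa using hy0
    rwa [h3] at h2
  have hIntegral : IsIntegral k[X] θ := Algebra.IsIntegral.isIntegral θ
  have hintE : IsIntegral E (algebraMap B K θ) := Algebra.IsIntegral.isIntegral _
  set P := minpoly k[X] θ
  have hPm : P.Monic := minpoly.monic hIntegral
  have hPE : minpoly E (algebraMap B K θ) = P.map (algebraMap k[X] E) := 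
    minpoly.isIntegrallyClosed_eq_field_fractions E K hIntegral
  have hPd : P.natDegree = dg k f := by
    rw [← hD, ← IntermediateField.finrank_top' (F := E) (E := K), ← htop, IntermediateField.adjoin.finrank hintE, hPE,
      hPm.natDegree_map]
  have hPr : eval₂ (algebraMap k[X] B) θ P = 0 := minpoly.aeval k[X] θ
  have hindep : ∀ U : k[X][X], U.natDegree < dg k f → eval₂ (algebraMap k[X] B) θ U = 0 → U = 0 := by
    intro U hU hU0
    have hdvd := minpoly.isIntegrallyClosed_dvd hIntegral (p := U) hU0
    by_contra hne
    have : P.natDegree ≤ _ := natDegree_le_of_dvd hdvd hne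
    omega
  -- cover
  have hcov1 : ∀ b : B, ∃ c : B, c ≠ 0 ∧ ∃ e : k[X], c = algebraMap k[X] B e ∧ ∃ U : k[X][X],
      c * b = eval₂ (algebraMap k[X] B) θ U := by
    intro b
    have hb : algebraMap B K b ∈ E⟮algebraMap B K θ⟯ := by rw [htop]; trivial
    rw [← IntermediateField.mem_toSubalgebra, IntermediateField.adjoin_simple_toSubalgebra_of_isAlgebraic hintE.isAlgebraic,
      Algebra.adjoin_singleton_eq_range_aeval] at hb
    obtain ⟨p, hp⟩ := hb
    obtain ⟨e, he, hep⟩ := IsLocalization.integerNormalization_spec (nonZeroDivisors k[X]) p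
    have he0 : algebraMap k[X] B e ≠ 0 := by
      simpa using nonZeroDivisors.ne_zero he
    refine ⟨algebraMap k[X] B e, he0, e, rfl, IsLocalization.integerNormalization (nonZeroDivisors k[X]) p, ?_⟩
    apply IsFractionRing.injective B K
    change _ = algebraMap B K (aeval θ _)
    rw [← aeval_algebraMap_apply, ← aeval_map_algebraMap E, hep]
    have : (aeval (algebraMap B K θ)) (e • p) = e • aeval (algebraMap B K θ) p := by
      rw [algebra_compatible_smul E, map_smul, ← algebra_compatible_smul E]
    rw [this]
    change (aeval (algebraMap B K θ)) p = _ at hp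
    rw [hp, map_mul, Algebra.smul_def, IsScalarTower.algebraMap_apply k[X] B K]
  choose c1 hc1 e1 he1 U1 hU1 using hcov1
  obtain ⟨S, hS⟩ := (Module.Finite.fg_top : (⊤ : Submodule k[X] B).FG)
  classical
  set c : B := ∏ s ∈ S, c1 s
  have hc0 : c ≠ 0 := Finset.prod_ne_zero_iff.2 fun s _ => hc1 s
  have hcov2 : ∀ b : B, ∃ U : k[X][X], c * b = eval₂ (algebraMap k[X] B) θ U := by
    intro b
    have hb : b ∈ Submodule.span k[X] (S : Set B) := by rw [hS]; trivial
    induction hb using Submodule.span_induction with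
    | zero => exact ⟨0, by simp⟩
    | mem s hs =>
      refine ⟨C (∏ t ∈ S.erase s, e1 t) * U1 s, ?_⟩
      have hs' : s ∈ S := hs
      rw [eval₂_mul, eval₂_C, ← hU1, map_prod]
      simp only [c, ← he1]
      rw [← Finset.mul_prod_erase S c1 hs']; ring
    | add x y _ _ hx hy =>
      obtain ⟨u, hu⟩ := hx
      obtain ⟨v, hv⟩ := hy
      exact ⟨u + v, by rw [mul_add, hu, hv, eval₂_add]⟩
    | smul a x _ hx =>
      obtain ⟨u, hu⟩ := hx
      exact ⟨C a * u, by rw [eval₂_mul, eval₂_C, ← hu, Algebra.smul_def]; ring⟩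
  refine ⟨f, θ, c, P, (P.map (algebraMap k[X] B)) /ₘ (X - C θ), δ, ⟨hf, hindep, hc0, ?_, ?_, ?_, ?_⟩, hδ⟩
  · intro b
    obtain ⟨U, hU⟩ := hcov2 b
    refine ⟨U %ₘ P, ?_, ?_⟩
    · rw [← hPd]
      apply natDegree_modByMonic_lt _ hPm
      intro h1
      rw [h1, natDegree_one] at hPd
      omega
    · rw [hU]
      conv_lhs => rw [← modByMonic_add_div U P]
      rw [eval₂_add, eval₂_mul, hPr, zero_mul, add_zero]
      rfl
  · apply Monic.of_mul_monic_left (monic_X_sub_C θ)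
    rw [mul_divByMonic_eq_iff_isRoot.2]
    · exact hPm.map _
    · rw [IsRoot, eval_map]; exact hPr
  · rw [natDegree_divByMonic _ (monic_X_sub_C θ), hPm.natDegree_map, hPd, natDegree_X_sub_C]; omega
  · symm
    rw [mul_divByMonic_eq_iff_isRoot.2]
    · rfl
    · rw [IsRoot, eval_map]; exact hPr

end frame
end Drin

namespace Drin
section stepanov
variable {k B : Type*} [Field k] [CommRing B] [IsDomain B] [Algebra k B]

/-- the monomial family -/
noncomputable def ww (k : Type*) {B : Type*} [Field k] [CommRing B] [IsDomain B] [Algebra k B] (f θ : B) (x : ℕ) : B :=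
  f ^ (x / dg k f) * θ ^ (x % dg k f)

lemma dg_ww (h : DegData k B) (f θ : B) (hf : 0 < dg k f) (x : ℕ) :
    dg k (ww k f θ x) ≤ x + dg k f * dg k θ := by
  unfold ww
  refine (h.mul_le _ _).trans ?_
  rw [h.dg_pow, h.dg_pow]
  refine Nat.add_le_add (Nat.div_mul_le_self _ _) (Nat.mul_le_mul_right _ (Nat.mod_lt _ hf).le)

lemma ww_indep {f θ c : B} {P : k[X][X]} {P1 : B[X]} (F : Frame k f θ c P P1) {M : ℕ} (l : Fin M → k)
    (hl : ∑ x, l x • ww k f θ x = 0) : l = 0 := by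
  let U : k[X][X] := ∑ x : Fin M, monomial (x % dg k f) (monomial (x / dg k f) (l x))
  have hU : U = 0 := by
    apply F.indep
    · have : U.natDegree ≤ dg k f - 1 := by
        apply natDegree_sum_le_of_forall_le
        intro i _
        refine (natDegree_monomial_le _).trans ?_
        have := Nat.mod_lt i F.pos
        omega
      have := F.pos
      omega
    · rw [← hl, eval₂_finsetSum]
      refine Finset.sum_congr rfl fun x _ => ?_
      rw [eval₂_monomial]
      simp [ww, aeval_monomial, Algebra.smul_def, mul_assoc]
  funext x0
  have h1 : (U.coeff (x0 % dg k f)).coeff (x0 / dg k f) = l x0 := by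
    simp only [U, finsetSum_coeff, coeff_monomial]
    rw [Finset.sum_eq_single x0]
    · simp
    · intro y _ hy
      by_cases h2 : (y : ℕ) % dg k f = x0 % dg k f
      · rw [if_pos h2, coeff_monomial, if_neg]
        intro h3
        apply hy
        apply Fin.ext
        rw [← Nat.div_add_mod y (dg k f), h2, h3, Nat.div_add_mod]
      · rw [if_neg h2, coeff_zero]
    · simp
  rw [← h1, hU]; simp

lemma fr_exists [Fintype k] (k' : Type*) [CommRing k'] [Algebra k k'] (j : ℕ) :
    ∃ φ : k' →ₐ[k] k', ∀ x, φ x = x ^ (Fintype.card k) ^ j := by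
  refine ⟨FiniteField.frobeniusAlgHom k k' ^ j, fun x => ?_⟩
  rw [AlgHom.coe_pow, FiniteField.coe_frobeniusAlgHom, pow_iterate]

lemma stepanov [Fintype k] (h : DegData k B) {f θ c : B} {P : k[X][X]} {P1 : B[X]} (F : Frame k f θ c P P1) :
    ∃ Cst : ℕ, ∀ (j1 j2 r n M : ℕ) (a : Fin r → B), (∀ i, dg k (a i) ≤ n) →
      (∀ σ : Fin r → B, ∑ i, a i * σ i ^ (Fintype.card k ^ j2) = 0 → σ = 0) →
      (dg k f - 1) * (n * Fintype.card k ^ j1 + M + Cst) < r * M →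
      ∃ t : B, t ≠ 0 ∧ dg k t ≤ n + (M + Cst) * Fintype.card k ^ j2 ∧
        ∀ p : B, Prime p → p ∣ f ^ (Fintype.card k ^ (j1 + j2)) - f →
          p ∣ c ∨ (∀ b : B, p ∣ b ^ (Fintype.card k ^ (j1 + j2)) - b) ∨ p ∣ t := by
  set D := dg k f with hD
  set q := Fintype.card k with hq
  set C2 := ∑ l ∈ Finset.range D, dg k (P1.coeff l) with hC2
  have hDpos : 0 < D := F.pos
  refine ⟨dg k f * dg k θ + C2 + D, ?_⟩
  intro j1 j2 r n M a ha hind hlt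
  -- the W polynomial
  let v : Fin r × Fin M → B[X] := fun z => monomial (z.2 % D) (a z.1 ^ (q ^ j1) * f ^ ((z.2 : ℕ) / D))
  let W : (Fin r × Fin M → k) →ₗ[k] B[X] := Fintype.linearCombination k v
  have hWdeg : ∀ l, (W l).natDegree < D := by
    intro l
    have : (W l).natDegree ≤ D - 1 := by
      simp only [W, Fintype.linearCombination_apply]
      apply natDegree_sum_le_of_forall_le
      intro i _
      refine (natDegree_smul_le _ _).trans ((natDegree_monomial_le _).trans ?_)
      have := Nat.mod_lt i.2 hDpos
      omega
    omega
  have hWcoeff : ∀ l s, dg k ((W l).coeff s) ≤ n * q ^ j1 + M := by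
    intro l s
    simp only [W, Fintype.linearCombination_apply, finsetSum_coeff, coeff_smul]
    apply h.dg_sum_le
    intro i _
    refine (h.dg_smul_le _ _).trans ?_
    simp only [v, coeff_monomial]
    split_ifs
    · refine (h.mul_le _ _).trans ?_
      rw [h.dg_pow, h.dg_pow]
      refine Nat.add_le_add ?_ ((Nat.div_mul_le_self _ _).trans i.2.2.le)
      rw [mul_comm]
      exact Nat.mul_le_mul_right _ (ha _)
    · rw [h.zero]; omega
  let N := n * q ^ j1 + M + C2
  let L0 : (s : ℕ) → (Fin r × Fin M → k) →ₗ[k] B := fun s =>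
    (((lcoeff B s).restrictScalars k) - (LinearMap.mulRight k (P1.coeff s)) ∘ₗ ((lcoeff B (D-1)).restrictScalars k)) ∘ₗ W
  have hL0 : ∀ s l, L0 s l = (W l).coeff s - (W l).coeff (D-1) * P1.coeff s := by
    intro s l
    simp [L0]
  have hL0m : ∀ (s : Fin (D-1)) l, L0 s l ∈ h.Le N := by
    intro s l
    rw [hL0, h.mem_Le]
    refine (h.dg_sub _ _).trans (max_le ?_ ?_)
    · have := hWcoeff l s; omega
    · refine (h.mul_le _ _).trans (Nat.add_le_add (hWcoeff _ _) ?_)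
      rw [hC2]
      refine Finset.single_le_sum (f := fun l => dg k (P1.coeff l)) (fun _ _ => Nat.zero_le _) ?_
      have := s.2
      simp; omega
  let L : (Fin r × Fin M → k) →ₗ[k] (Fin (D-1) → h.Le N) :=
    LinearMap.pi fun s => (L0 s).codRestrict (h.Le N) (hL0m s)
  obtain ⟨hfin, hrank⟩ := h.Le_fin f F.pos N
  have hker : LinearMap.ker L ≠ ⊥ := by
    apply LinearMap.ker_ne_bot_of_finrank_lt
    rw [Module.finrank_pi_fintype, Module.finrank_fintype_fun_eq_card]
    simp only [Finset.sum_const, Finset.card_univ, Fintype.card_fin, Fintype.card_prod, smul_eq_mul]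
    refine lt_of_le_of_lt ?_ hlt
    apply Nat.mul_le_mul_left
    omega
  obtain ⟨l, hlm, hl0⟩ := Submodule.exists_mem_ne_zero_of_ne_bot hker
  rw [LinearMap.mem_ker] at hlm
  have hW : W l = C ((W l).coeff (D-1)) * P1 := by
    ext s
    rw [coeff_C_mul]
    have hP1 := F.P1deg
    rcases lt_trichotomy s (D-1) with hs | hs | hs
    · have h1 := congrFun hlm ⟨s, hs⟩
      have h2 : L0 s l = 0 := congrArg Subtype.val h1
      rw [hL0] at h2
      exact sub_eq_zero.1 h2
    · have h1 : P1.coeff (D-1) = 1 := by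
        have := F.P1mon.coeff_natDegree
        rwa [show P1.natDegree = D - 1 by omega] at this
      rw [hs, h1, mul_one]
    · have h1 : (W l).coeff s = 0 := coeff_eq_zero_of_natDegree_lt (by have := hWdeg l; omega)
      have h2 : P1.coeff s = 0 := coeff_eq_zero_of_natDegree_lt (by omega)
      rw [h1, h2, mul_zero]
  let s : Fin r → B := fun i => ∑ x, l (i, x) • ww k f θ x
  refine ⟨∑ i, a i * s i ^ (q ^ j2), ?_, ?_, ?_⟩
  · intro h0
    apply hl0
    have h1 := hind s h0
    funext z
    have h2 := ww_indep F (fun x => l (z.1, x)) (congrFun h1 z.1)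
    exact congrFun h2 z.2
  · apply h.dg_sum_le
    intro i _
    refine (h.mul_le _ _).trans (Nat.add_le_add (ha i) ?_)
    rw [h.dg_pow, mul_comm]
    apply Nat.mul_le_mul_right
    apply h.dg_sum_le
    intro x _
    refine (h.dg_smul_le _ _).trans ((dg_ww h f θ F.pos _).trans ?_)
    have := x.2
    omega
  · intro p hp hpf
    by_cases hpc : p ∣ c
    · exact Or.inl hpc
    right
    set Q := q ^ (j1 + j2) with hQ
    haveI : (Ideal.span {p}).IsPrime := (Ideal.span_singleton_prime hp.ne_zero).2 hp
    let π : B →ₐ[k] B ⧸ Ideal.span {p} := Ideal.Quotient.mkₐ k _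
    have hπ : ∀ b, π b = 0 ↔ p ∣ b := by
      intro b
      rw [← Ideal.mem_span_singleton]
      exact Ideal.Quotient.eq_zero_iff_mem
    obtain ⟨fr, hfr⟩ := fr_exists (k := k) B (j1 + j2)
    obtain ⟨fr1, hfr1⟩ := fr_exists (k := k) B j1
    have hff : π (f ^ Q) = π f := by
      rw [← sub_eq_zero, ← map_sub, hπ]; exact hpf
    have hev : ∀ u : k[X], π (fr (aeval f u)) = π (aeval f u) := by
      intro u
      rw [← AlgHom.comp_apply, ← aeval_algHom_apply, ← aeval_algHom_apply]
      congr 2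
      rw [AlgHom.comp_apply, hfr]; exact hff
    by_cases hθ : π (θ ^ Q) = π θ
    · left
      have key : ∀ b : B, π (fr (c * b)) = π (c * b) := by
        intro b
        obtain ⟨U, _, hU⟩ := F.cover b
        rw [hU, eval₂_eq_sum_range, map_sum, map_sum, map_sum]
        refine Finset.sum_congr rfl fun i _ => ?_
        rw [map_mul, map_mul, map_mul, map_pow, map_pow, map_pow, hfr θ]
        congr 1
        · exact hev _
        · rw [hθ]
      intro b
      rw [← hπ, map_sub]
      have h1 := key 1
      rw [mul_one] at h1
      have h2 := key b
      rw [map_mul, map_mul, h1, map_mul, hfr b] at h2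
      have h3 : π c ≠ 0 := fun h0 => hpc ((hπ c).1 h0)
      rw [sub_eq_zero]
      exact mul_left_cancel₀ h3 h2
    · right
      -- P1 at θ^Q vanishes
      have hP : π (P1.eval (θ ^ Q)) = 0 := by
        have h1 : π ((P.map (aeval f : k[X] →ₐ[k] B).toRingHom).eval (θ ^ Q)) = 0 := by
          have h2 : fr ((P.map (aeval f : k[X] →ₐ[k] B).toRingHom).eval θ) = 0 := by
            rw [F.fact]; simp
          have h3 : π (fr ((P.map (aeval f : k[X] →ₐ[k] B).toRingHom).eval θ)) = 0 := by rw [h2, map_zero]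
          rw [← h3, eval_map, eval_map, eval₂_eq_sum_range, eval₂_eq_sum_range, map_sum, map_sum, map_sum]
          refine Finset.sum_congr rfl fun i _ => ?_
          rw [map_mul, map_mul, map_mul, map_pow, map_pow, map_pow, hfr θ]
          congr 1
          exact (hev _).symm
        rw [F.fact, eval_mul, eval_sub, eval_X, eval_C, map_mul, map_sub] at h1
        rcases mul_eq_zero.1 h1 with h2 | h2
        · exact absurd (sub_eq_zero.1 h2) hθ
        · exact h2
      have hWev : π ((W l).eval (θ ^ Q)) = 0 := by
        rw [hW, eval_mul, map_mul, hP, mul_zero]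
      have ht : π (fr1 (∑ i, a i * s i ^ (q ^ j2))) = π ((W l).eval (θ ^ Q)) := by
        simp only [W, Fintype.linearCombination_apply, eval_finsetSum, map_sum, Fintype.sum_prod_type]
        refine Finset.sum_congr rfl fun i _ => ?_
        rw [map_mul, map_mul, hfr1, hfr1, ← pow_mul, ← pow_add, add_comm j2 j1, ← hfr]
        simp only [s, map_sum, Finset.mul_sum]
        refine Finset.sum_congr rfl fun x _ => ?_
        rw [map_smul, map_smul, eval_smul, map_smul, mul_smul_comm]
        congr 1
        simp only [v, eval_monomial, ww, map_mul, map_pow, hfr]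
        rw [map_pow] at hff
        rw [← hq, ← hQ, ← hD, mul_pow, ← pow_mul, mul_comm _ Q, pow_mul, hff, ← pow_mul, mul_comm _ Q, pow_mul, mul_assoc]
      rw [hWev, hfr1, hπ] at ht
      exact hp.dvd_of_dvd_pow ht
end stepanov
end Drin

namespace Drin
section counting
variable {M : Type*} [CommMonoidWithZero M] [UniqueFactorizationMonoid M] [Subsingleton Mˣ]

structure MonDeg (d : M → ℕ) : Prop where
  mul : ∀ a b, a ≠ 0 → b ≠ 0 → d (a * b) = d a + d b
  one : ∀ a, a ≠ 0 → d a = 0 → a = 1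
  fin : ∀ n, {a : M | a ≠ 0 ∧ d a = n}.Finite

namespace MonDeg

noncomputable def lev {d : M → ℕ} (H : MonDeg d) (n : ℕ) : Finset M := (H.fin n).toFinset

open Classical in
noncomputable def pr {d : M → ℕ} (H : MonDeg d) (n : ℕ) : Finset M :=
  ((Finset.Icc 1 n).biUnion H.lev).filter Prime

open Classical in
/-- The point count. -/
noncomputable def NN {d : M → ℕ} (H : MonDeg d) (n : ℕ) : ℕ := ∑ p ∈ (H.pr n).filter (fun p => d p ∣ n), d p

lemma mem_lev {d : M → ℕ} (H : MonDeg d) (n : ℕ) (a : M) : a ∈ H.lev n ↔ a ≠ 0 ∧ d a = n := by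
  simp [lev]

lemma d_one [Nontrivial M] {d : M → ℕ} (H : MonDeg d) : d 1 = 0 := by
  have := H.mul 1 1 one_ne_zero one_ne_zero
  rw [mul_one] at this; omega

lemma d_pos [Nontrivial M] {d : M → ℕ} (H : MonDeg d) (p : M) (hp : Prime p) : 0 < d p := by
  rw [Nat.pos_iff_ne_zero]
  intro h0
  exact hp.ne_one (H.one p hp.ne_zero h0)

lemma d_pow [Nontrivial M] {d : M → ℕ} (H : MonDeg d) (p : M) (hp : p ≠ 0) (n : ℕ) : d (p ^ n) = n * d p := by
  induction n with
  | zero => simp [H.d_one]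
  | succ n ih =>
    rw [pow_succ, H.mul _ _ (pow_ne_zero _ hp) hp, ih]; ring

lemma d_dvd {d : M → ℕ} (H : MonDeg d) (a b : M) (hb : b ≠ 0) (hab : a ∣ b) : d a ≤ d b := by
  obtain ⟨c, rfl⟩ := hab
  rw [H.mul _ _ (left_ne_zero_of_mul hb) (right_ne_zero_of_mul hb)]; omega

lemma mem_pr [Nontrivial M] {d : M → ℕ} (H : MonDeg d) (n : ℕ) (p : M) : p ∈ H.pr n ↔ Prime p ∧ d p ≤ n := by
  simp only [pr, Finset.mem_filter, Finset.mem_biUnion, Finset.mem_Icc, mem_lev]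
  constructor
  · rintro ⟨⟨j, hj, _, rfl⟩, h2⟩
    exact ⟨h2, hj.2⟩
  · rintro ⟨h1, h2⟩
    exact ⟨⟨d p, ⟨H.d_pos p h1, h2⟩, h1.ne_zero, rfl⟩, h1⟩

lemma sum_primes [Nontrivial M] {d : M → ℕ} (H : MonDeg d) (s : Finset M) (a : M) (ha : a ≠ 0)
    (hs : ∀ p ∈ s, Prime p ∧ p ∣ a) : ∑ p ∈ s, d p ≤ d a := by
  have h1 := Finset.prod_primes_dvd a (fun p hp => (hs p hp).1) (fun p hp => (hs p hp).2)
  refine le_trans (le_of_eq ?_) (H.d_dvd _ _ ha h1)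
  clear h1
  classical
  induction s using Finset.induction_on with
  | empty => simp [H.d_one]
  | insert p s hp ih =>
    rw [Finset.sum_insert hp, Finset.prod_insert hp, H.mul, ih]
    · intro p hp'; exact hs p (Finset.mem_insert_of_mem hp')
    · exact (hs p (Finset.mem_insert_self _ _)).1.ne_zero
    · exact Finset.prod_ne_zero_iff.2 fun x hx => (hs x (Finset.mem_insert_of_mem hx)).1.ne_zero

open UniqueFactorizationMonoid in
lemma count_rec [Nontrivial M] {d : M → ℕ} (H : MonDeg d) (n : ℕ) :
    n * (H.lev n).card = ∑ z ∈ Finset.HasAntidiagonal.antidiagonal n,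
      (if z.1 = 0 then 0 else H.NN z.1) * (H.lev z.2).card := by
  classical
  letI : StrongNormalizationMonoid M := UniqueFactorizationMonoid.strongNormalizationMonoid
  have hno : ∀ x : M, normalize x = x := fun x => associated_iff_eq.1 (normalize_associated x)
  have key : ∀ z ∈ Finset.HasAntidiagonal.antidiagonal n,
      (if z.1 = 0 then 0 else H.NN z.1) * (H.lev z.2).card =
      ∑ a ∈ H.lev n, ∑ p ∈ H.pr n, d p * (if z.1 ≠ 0 ∧ d p ∣ z.1 ∧ p ^ (z.1 / d p) ∣ a then 1 else 0) := by
    intro z hz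
    rw [Finset.HasAntidiagonal.mem_antidiagonal] at hz
    by_cases h0 : z.1 = 0
    · simp [h0]
    rw [if_neg h0, Finset.sum_comm, NN, Finset.sum_mul]
    have hsub : (H.pr z.1).filter (fun p => d p ∣ z.1) = (H.pr n).filter (fun p => d p ∣ z.1) := by
      ext p
      simp only [Finset.mem_filter, mem_pr]
      constructor
      · rintro ⟨⟨h1, h2⟩, h3⟩
        exact ⟨⟨h1, by omega⟩, h3⟩
      · rintro ⟨⟨h1, h2⟩, h3⟩
        exact ⟨⟨h1, Nat.le_of_dvd (by omega) h3⟩, h3⟩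
    rw [hsub, Finset.sum_filter]
    refine Finset.sum_congr rfl fun p hp => ?_
    rw [mem_pr] at hp
    split_ifs with hdvd
    · rw [← Finset.mul_sum]
      congr 1
      rw [Finset.sum_boole]
      simp only [Nat.cast_id]
      symm
      have hpp : p ^ (z.1 / d p) ≠ 0 := pow_ne_zero _ hp.1.ne_zero
      have hdp : d (p ^ (z.1 / d p)) = z.1 := by
        rw [H.d_pow p hp.1.ne_zero, Nat.div_mul_cancel hdvd]
      refine Finset.card_bij' (fun a ha => Classical.choose (Finset.mem_filter.1 ha).2.2.2) (fun b _ => p ^ (z.1 / d p) * b) ?_ ?_ ?_ ?_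
      · intro a ha
        have hc := Classical.choose_spec (Finset.mem_filter.1 ha).2.2.2
        set b := Classical.choose (Finset.mem_filter.1 ha).2.2.2
        have h1 := (H.mem_lev _ _).1 (Finset.mem_filter.1 ha).1
        rw [mem_lev]
        rw [hc] at h1
        refine ⟨right_ne_zero_of_mul h1.1, ?_⟩
        have h2 := h1.2
        rw [H.mul _ _ hpp (right_ne_zero_of_mul h1.1), hdp] at h2
        omega
      · intro b hb
        rw [mem_lev] at hb
        rw [Finset.mem_filter, mem_lev]
        refine ⟨⟨mul_ne_zero hpp hb.1, ?_⟩, h0, hdvd, dvd_mul_right _ _⟩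
        rw [H.mul _ _ hpp hb.1, hdp, hb.2, hz]
      · intro a ha
        exact (Classical.choose_spec (Finset.mem_filter.1 ha).2.2.2).symm
      · intro b hb
        have hb' := hb
        rw [mem_lev] at hb'
        have hm : p ^ (z.1 / d p) * b ∈ (H.lev n).filter (fun a => z.1 ≠ 0 ∧ d p ∣ z.1 ∧ p ^ (z.1 / d p) ∣ a) := by
          rw [Finset.mem_filter, mem_lev]
          refine ⟨⟨mul_ne_zero hpp hb'.1, ?_⟩, h0, hdvd, dvd_mul_right _ _⟩
          rw [H.mul _ _ hpp hb'.1, hdp, hb'.2, hz]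
        exact (mul_left_cancel₀ hpp (Classical.choose_spec (Finset.mem_filter.1 hm).2.2.2)).symm
    · simp [hdvd]
  rw [Finset.sum_congr rfl key, Finset.sum_comm]
  have : n * (H.lev n).card = ∑ a ∈ H.lev n, n := by simp [mul_comm]
  rw [this]
  refine Finset.sum_congr rfl fun a ha => ?_
  rw [Finset.sum_comm]
  rw [mem_lev] at ha
  have hprod := prod_normalizedFactors_eq (a := a) ha.1
  have hd : ∀ s : Multiset M, (∀ p ∈ s, p ≠ 0) → d s.prod = (s.map d).sum := by
    intro s
    induction s using Multiset.induction_on with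
    | empty => simp [H.d_one]
    | cons p s ih =>
      intro hs
      rw [Multiset.prod_cons, Multiset.map_cons, Multiset.sum_cons, H.mul, ih]
      · intro p hp; exact hs p (Multiset.mem_cons_of_mem hp)
      · exact hs p (Multiset.mem_cons_self _ _)
      · exact Multiset.prod_ne_zero fun h0 => hs 0 (Multiset.mem_cons_of_mem h0) rfl
  have hn : n = ((normalizedFactors a).map d).sum := by
    rw [← hd _ (fun p hp => (prime_of_normalized_factor p hp).ne_zero), hprod, hno, ha.2]
  conv_lhs => rw [hn, Finset.sum_multiset_map_count]
  rw [Finset.sum_subset (s₂ := H.pr n)]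
  · refine Finset.sum_congr rfl fun p hp => ?_
    rw [mem_pr] at hp
    rw [← Finset.mul_sum, smul_eq_mul, mul_comm]
    congr 1
    rw [Finset.sum_boole]
    simp only [Nat.cast_id]
    have hdp := H.d_pos p hp.1
    have hcount : ∀ e, p ^ e ∣ a ↔ e ≤ Multiset.count p (normalizedFactors a) := by
      intro e
      have h1 := emultiplicity_eq_count_normalizedFactors hp.1.irreducible ha.1
      rw [hno] at h1
      rw [pow_dvd_iff_le_emultiplicity, h1]
      exact_mod_cast Iff.rfl
    have : Multiset.count p (normalizedFactors a) = (Finset.Icc 1 (Multiset.count p (normalizedFactors a))).card := by simp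
    rw [this]
    refine Finset.card_bij' (fun e _ => (e * d p, n - e * d p)) (fun z _ => z.1 / d p) ?_ ?_ ?_ ?_
    · intro e he
      rw [Finset.mem_Icc] at he
      have h1 := (hcount e).2 he.2
      have h2 := H.d_dvd _ _ ha.1 h1
      rw [H.d_pow p hp.1.ne_zero, ha.2] at h2
      rw [Finset.mem_filter, Finset.HasAntidiagonal.mem_antidiagonal]
      refine ⟨by simp only; omega, ?_, Dvd.intro_left _ rfl, ?_⟩
      · exact Nat.mul_ne_zero (by omega) (by omega)
      · rw [Nat.mul_div_cancel _ hdp]; exact h1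
    · intro z hz
      rw [Finset.mem_filter, Finset.HasAntidiagonal.mem_antidiagonal] at hz
      rw [Finset.mem_Icc, ← hcount]
      refine ⟨?_, hz.2.2.2⟩
      exact Nat.div_pos (Nat.le_of_dvd (by omega) hz.2.2.1) hdp
    · intro e _
      exact Nat.mul_div_cancel _ hdp
    · intro z hz
      rw [Finset.mem_filter, Finset.HasAntidiagonal.mem_antidiagonal] at hz
      rw [Nat.div_mul_cancel hz.2.2.1]
      ext
      · rfl
      · simp only; omega
  · intro p hp
    rw [Multiset.mem_toFinset] at hp
    rw [mem_pr]
    refine ⟨prime_of_normalized_factor p hp, ?_⟩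
    rw [← ha.2]
    exact H.d_dvd _ _ ha.1 (dvd_of_mem_normalizedFactors hp)
  · intro p _ hp
    rw [Multiset.mem_toFinset] at hp
    simp [Multiset.count_eq_zero_of_notMem hp]

end MonDeg
end counting
end Drin

namespace Drin
section core
variable {k B : Type*} [Field k] [CommRing B] [IsDomain B] [Algebra k B]

noncomputable def dA (k : Type*) {B : Type*} [Field k] [CommRing B] [IsDomain B] [Algebra k B]
    (a : Associates B) : ℕ := dg k (Quotient.out a)

lemma dA_mk (h : DegData k B) (b : B) : dA k (Associates.mk b) = dg k b := by
  apply h.dg_associated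
  rw [← Associates.mk_eq_mk_iff_associated]
  exact Quotient.out_eq _

lemma Le_finite [Finite k] (h : DegData k B) (n : ℕ) : {b : B | dg k b ≤ n}.Finite := by
  obtain ⟨f, hf⟩ := h.pos
  haveI := (h.Le_fin f hf n).1
  haveI : Finite (h.Le n) := Module.finite_of_finite k
  exact Set.toFinite (h.Le n : Set B)

lemma monDeg [Finite k] [UniqueFactorizationMonoid B] (h : DegData k B) :
    MonDeg (M := Associates B) (dA k) := by
  refine ⟨?_, ?_, ?_⟩
  · intro a b ha hb
    obtain ⟨a, rfl⟩ := Associates.mk_surjective a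
    obtain ⟨b, rfl⟩ := Associates.mk_surjective b
    rw [Associates.mk_mul_mk, dA_mk h, dA_mk h, dA_mk h]
    exact h.mul a b (Associates.mk_ne_zero.1 ha) (Associates.mk_ne_zero.1 hb)
  · intro a ha
    obtain ⟨a, rfl⟩ := Associates.mk_surjective a
    rw [dA_mk h, ← h.isUnit_iff a (Associates.mk_ne_zero.1 ha)]
    exact Associates.mk_eq_one.2
  · intro n
    refine ((Le_finite h n).image Associates.mk).subset ?_
    rintro a ⟨h1, h2⟩
    obtain ⟨a, rfl⟩ := Associates.mk_surjective a
    rw [dA_mk h] at h2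
    exact ⟨a, h2.le, rfl⟩

lemma type_one [Fintype k] (h : DegData k B) (p : B) (hp : Prime p) (j : ℕ)
    (ht : ∀ b : B, p ∣ b ^ (Fintype.card k ^ j) - b) : dg k p ∣ j := by
  haveI : (Ideal.span {p}).IsPrime := (Ideal.span_singleton_prime hp.ne_zero).2 hp
  haveI := h.fin p hp.ne_zero
  haveI : Finite (B ⧸ Ideal.span {p}) := Module.finite_of_finite k
  haveI : IsDomain (B ⧸ Ideal.span {p}) := Ideal.Quotient.isDomain _
  letI : Field (B ⧸ Ideal.span {p}) := (Finite.isField_of_domain _).toField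
  have h1 := FiniteField.orderOf_frobeniusAlgHom k (B ⧸ Ideal.span {p})
  unfold dg
  rw [← h1]
  apply orderOf_dvd_of_pow_eq_one
  ext x
  rw [AlgHom.coe_pow, FiniteField.coe_frobeniusAlgHom, pow_iterate, AlgHom.one_apply]
  obtain ⟨b, rfl⟩ := Ideal.Quotient.mk_surjective x
  change (Ideal.Quotient.mk (Ideal.span {p}) b) ^ (Fintype.card k ^ j) = _
  rw [← map_pow, Ideal.Quotient.eq, Ideal.mem_span_singleton]
  exact ht b

lemma core [Fintype k] [UniqueFactorizationMonoid B] (h : DegData k B) (f c t : B) (δ : Derivation k B B)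
    (hf : 0 < dg k f) (hδ : δ f ≠ 0) (hc : c ≠ 0) (ht : t ≠ 0) (j : ℕ) (hj : 1 ≤ j)
    (hdv : ∀ p : B, Prime p → p ∣ f ^ (Fintype.card k ^ j) - f →
      p ∣ c ∨ (∀ b : B, p ∣ b ^ (Fintype.card k ^ j) - b) ∨ p ∣ t) :
    Fintype.card k ^ j * dg k f ≤ (monDeg h).NN j + dg k (δ f) + dg k c + dg k t := by
  classical
  set q := Fintype.card k with hq
  set Q := q ^ j with hQ
  have hq2 : 2 ≤ q := Fintype.one_lt_card
  have hQ2 : 2 ≤ Q := hq2.trans (Nat.le_self_pow (by omega) q)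
  set H := monDeg h
  set g := f ^ Q - f with hg
  have hdg : dg k g = Q * dg k f := by
    rw [hg, sub_eq_add_neg, h.dg_add_eq, h.dg_pow]
    rw [h.dg_neg, h.dg_pow]
    nlinarith
  have hg0 : g ≠ 0 := by
    apply h.ne_zero_of_pos
    rw [hdg]; positivity
  have hQ0 : (Q : B) = 0 := by
    rw [hQ, Nat.cast_pow]
    have : (q : B) = algebraMap k B (q : k) := by simp
    rw [this, hq, FiniteField.cast_card_eq_zero, map_zero, zero_pow (by omega)]
  have hδg : δ g = - δ f := by
    rw [hg, map_sub, Derivation.leibniz_pow, nsmul_eq_mul, hQ0, zero_mul, zero_sub]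
  let S : Finset (Associates B) := (H.pr (dg k g)).filter (fun P => P ∣ Associates.mk g)
  have hS : ∀ P, P ∈ S ↔ Prime P ∧ P ∣ Associates.mk g := by
    intro P
    simp only [S, Finset.mem_filter, H.mem_pr]
    constructor
    · rintro ⟨⟨h1, h2⟩, h3⟩; exact ⟨h1, h3⟩
    · rintro ⟨h1, h3⟩
      refine ⟨⟨h1, ?_⟩, h3⟩
      have := H.d_dvd _ _ (Associates.mk_ne_zero.2 hg0) h3
      rwa [dA_mk h] at this
  have hram : Associates.mk g ∣ Associates.mk (δ f) * ∏ P ∈ S, P := by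
    rw [UniqueFactorizationMonoid.dvd_iff_emultiplicity_le (Associates.mk_ne_zero.2 hg0)]
    intro P hP
    rw [emultiplicity_le_emultiplicity_iff]
    intro e he
    rcases e with _ | e
    · simp
    have h1 : P ∣ ∏ P ∈ S, P := Finset.dvd_prod_of_mem _ ((hS P).2 ⟨hP, (dvd_pow_self _ (by omega)).trans he⟩)
    rw [pow_succ]
    refine mul_dvd_mul ?_ h1
    obtain ⟨p, rfl⟩ := Associates.mk_surjective P
    rw [← Associates.mk_pow, Associates.mk_dvd_mk] at he ⊢
    obtain ⟨u, hu⟩ := he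
    rw [← dvd_neg, ← hδg, hu, Derivation.leibniz, Derivation.leibniz_pow]
    refine dvd_add ?_ ?_
    · exact Dvd.dvd.mul_right (pow_dvd_pow _ (by omega)) _
    · simp only [Nat.add_sub_cancel, smul_eq_mul, nsmul_eq_mul]
      exact Dvd.dvd.mul_left (Dvd.dvd.mul_left (Dvd.dvd.mul_right dvd_rfl _) _) _
  have hprod0 : ∏ P ∈ S, P ≠ 0 := Finset.prod_ne_zero_iff.2 fun P hP => ((hS P).1 hP).1.ne_zero
  have hle1 : dg k g ≤ dg k (δ f) + ∑ P ∈ S, dA k P := by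
    have h1 := H.d_dvd _ _ (mul_ne_zero (Associates.mk_ne_zero.2 hδ) hprod0) hram
    rw [H.mul _ _ (Associates.mk_ne_zero.2 hδ) hprod0, dA_mk h, dA_mk h] at h1
    refine h1.trans (Nat.add_le_add_left ?_ _)
    clear h1 hram
    have : ∀ s : Finset (Associates B), (∀ P ∈ s, P ≠ 0) → dA k (∏ P ∈ s, P) ≤ ∑ P ∈ s, dA k P := by
      intro s
      induction s using Finset.induction_on with
      | empty => intro _; simp [H.d_one]
      | insert p s hp ih =>
        intro hs
        rw [Finset.sum_insert hp, Finset.prod_insert hp, H.mul]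
        · exact Nat.add_le_add_left (ih fun P hP => hs P (Finset.mem_insert_of_mem hP)) _
        · exact hs _ (Finset.mem_insert_self _ _)
        · exact Finset.prod_ne_zero_iff.2 fun x hx => (hs x (Finset.mem_insert_of_mem hx))
    exact this S fun P hP => ((hS P).1 hP).1.ne_zero
  have hsub : S ⊆ (S.filter (fun P => P ∣ Associates.mk c) ∪ (H.pr j).filter (fun P => dA k P ∣ j)) ∪
      S.filter (fun P => P ∣ Associates.mk t) := by
    intro P hP
    simp only [Finset.mem_union, Finset.mem_filter]
    have hP' := (hS P).1 hP
    obtain ⟨p, rfl⟩ := Associates.mk_surjective P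
    rw [Associates.prime_mk, Associates.mk_dvd_mk] at hP'
    rcases hdv p hP'.1 hP'.2 with h1 | h1 | h1
    · left; left; exact ⟨hP, Associates.mk_dvd_mk.2 h1⟩
    · left; right
      have h2 := type_one h p hP'.1 j h1
      rw [H.mem_pr, dA_mk h]
      exact ⟨⟨Associates.prime_mk.2 hP'.1, Nat.le_of_dvd (by omega) h2⟩, h2⟩
    · right; exact ⟨hP, Associates.mk_dvd_mk.2 h1⟩
  have hle2 : ∑ P ∈ S, dA k P ≤ dg k c + H.NN j + dg k t := by
    have hcc : ∑ P ∈ S.filter (fun P => P ∣ Associates.mk c), dA k P ≤ dg k c := by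
      rw [← dA_mk h c]
      refine H.sum_primes _ _ (Associates.mk_ne_zero.2 hc) fun P hP => ?_
      rw [Finset.mem_filter] at hP
      exact ⟨((hS P).1 hP.1).1, hP.2⟩
    have htt : ∑ P ∈ S.filter (fun P => P ∣ Associates.mk t), dA k P ≤ dg k t := by
      rw [← dA_mk h t]
      refine H.sum_primes _ _ (Associates.mk_ne_zero.2 ht) fun P hP => ?_
      rw [Finset.mem_filter] at hP
      exact ⟨((hS P).1 hP.1).1, hP.2⟩
    have hNN : H.NN j = ∑ P ∈ (H.pr j).filter (fun P => dA k P ∣ j), dA k P := by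
      unfold MonDeg.NN; congr!
    have hun : ∀ s u : Finset (Associates B), ∑ P ∈ s ∪ u, dA k P ≤ ∑ P ∈ s, dA k P + ∑ P ∈ u, dA k P := by
      intro s u
      rw [← Finset.sum_union_inter]; omega
    refine (Finset.sum_le_sum_of_subset hsub).trans ((hun _ _).trans ?_)
    refine Nat.add_le_add ((hun _ _).trans (Nat.add_le_add hcc hNN.ge)) htt
  rw [hdg] at hle1
  omega
end core
end Drin

namespace Drin
section cofin
variable {k B : Type*} [Field k] [CommRing B] [IsDomain B] [Algebra k B]

lemma root_lemma [Fintype k] [IsPrincipalIdealRing B] (h : DegData k B) (u v : B) (hv : v ≠ 0)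
    (hm : ∀ m : ℕ, ∃ y z : B, z ≠ 0 ∧ u * z ^ (Fintype.card k ^ m) = y ^ (Fintype.card k ^ m) * v) :
    ∃ c : k, u = c • v := by
  by_cases hu : u = 0
  · exact ⟨0, by simp [hu]⟩
  obtain ⟨v', u', c', hcop, rfl, rfl⟩ := UniqueFactorizationMonoid.exists_reduced_factors v hv u
  have hc0 : c' ≠ 0 := left_ne_zero_of_mul hv
  have hv0 : v' ≠ 0 := right_ne_zero_of_mul hv
  have hu0 : u' ≠ 0 := right_ne_zero_of_mul hu
  set q := Fintype.card k with hq
  have hq2 : 1 < q := Fintype.one_lt_card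
  obtain ⟨m, hmm⟩ : ∃ m : ℕ, dg k u' + dg k v' < q ^ m :=
    ⟨_, Nat.lt_pow_self hq2⟩
  obtain ⟨y, z, hz, hyz⟩ := hm m
  set Q := q ^ m with hQ
  obtain ⟨z', y', e, hcop', rfl, rfl⟩ := UniqueFactorizationMonoid.exists_reduced_factors z hz y
  have he0 : e ≠ 0 := left_ne_zero_of_mul hz
  have hz0 : z' ≠ 0 := right_ne_zero_of_mul hz
  have key : u' * z' ^ Q = y' ^ Q * v' := by
    have : (c' * e ^ Q) * (u' * z' ^ Q) = (c' * e ^ Q) * (y' ^ Q * v') := by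
      rw [mul_pow, mul_pow] at hyz
      linear_combination hyz
    exact mul_left_cancel₀ (mul_ne_zero hc0 (pow_ne_zero _ he0)) this
  have hy0 : y' ≠ 0 := by
    rintro rfl
    have hQ0 : Q ≠ 0 := by omega
    rw [zero_pow hQ0, zero_mul] at key
    exact mul_ne_zero hu0 (pow_ne_zero _ hz0) key
  have c1 : IsCoprime v' u' := hcop.isCoprime
  have c2 : IsCoprime (z' ^ Q) (y' ^ Q) := hcop'.isCoprime.pow
  have d1 : z' ^ Q ∣ v' := c2.dvd_of_dvd_mul_left ⟨u', by rw [← key]; ring⟩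
  have d2 : v' ∣ z' ^ Q := c1.dvd_of_dvd_mul_left ⟨y' ^ Q, by rw [key]; ring⟩
  have d3 : y' ^ Q ∣ u' := c2.symm.dvd_of_dvd_mul_left ⟨v', by rw [← key]; ring⟩
  have d4 : u' ∣ y' ^ Q := c1.symm.dvd_of_dvd_mul_right ⟨z' ^ Q, by rw [← key]⟩
  have e1 := h.dvd_le _ _ hv0 d1
  have e2 := h.dvd_le _ _ (pow_ne_zero _ hz0) d2
  have e3 := h.dvd_le _ _ hu0 d3
  have e4 := h.dvd_le _ _ (pow_ne_zero _ hy0) d4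
  rw [h.dg_pow] at e1 e2 e3 e4
  have f1 : dg k z' = 0 := by
    by_contra h0
    have : 1 ≤ dg k z' := Nat.one_le_iff_ne_zero.2 h0
    nlinarith
  have f2 : dg k y' = 0 := by
    by_contra h0
    have : 1 ≤ dg k y' := Nat.one_le_iff_ne_zero.2 h0
    nlinarith
  rw [f1, mul_zero] at e2
  rw [f2, mul_zero] at e4
  obtain ⟨a, ha⟩ := (h.const u').1 (by omega)
  obtain ⟨b, hb⟩ := (h.const v').1 (by omega)
  have hb0 : b ≠ 0 := by rintro rfl; rw [map_zero] at hb; exact hv0 hb.symm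
  refine ⟨a / b, ?_⟩
  rw [Algebra.smul_def, ← ha, ← hb]
  have : algebraMap k B a = algebraMap k B (a / b) * algebraMap k B b := by
    rw [← map_mul, div_mul_cancel₀ _ hb0]
  rw [this]; ring

lemma frob_indep [Fintype k] [IsPrincipalIdealRing B] (h : DegData k B) (r : ℕ) (a : Fin r → B)
    (ha : LinearIndependent k a) : ∃ i0 : ℕ, ∀ i, i0 ≤ i → ∀ σ : Fin r → B,
      ∑ s, a s * σ s ^ (Fintype.card k ^ i) = 0 → σ = 0 := by
  induction r with
  | zero => exact ⟨0, fun i _ σ _ => Subsingleton.elim _ _⟩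
  | succ r ih =>
    set q := Fintype.card k with hq
    have hq0 : ∀ i, q ^ i ≠ 0 := fun i => pow_ne_zero _ Fintype.card_ne_zero
    obtain ⟨i0, hi0⟩ := ih (fun s => a s.succ) (ha.comp _ (Fin.succ_injective r))
    by_contra hcon
    push Not at hcon
    -- all levels fail
    have hfail : ∀ i, i0 ≤ i → ∃ (τ : B) (σ : Fin r → B), τ ≠ 0 ∧
        a 0 * τ ^ (q ^ i) + ∑ s, a s.succ * σ s ^ (q ^ i) = 0 := by
      intro i hi
      obtain ⟨i', hi', σ, hσ, hσ0⟩ := hcon i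
      refine ⟨σ 0 ^ (q ^ (i' - i)), fun s => σ s.succ ^ (q ^ (i' - i)), ?_, ?_⟩
      · intro h0
        have h1 : σ 0 = 0 := (pow_eq_zero_iff (hq0 _)).1 h0
        rw [Fin.sum_univ_succ, h1, zero_pow (hq0 _), mul_zero, zero_add] at hσ
        have h2 := hi0 i' (hi.trans hi') _ hσ
        apply hσ0
        funext s
        refine Fin.cases h1 (fun s => ?_) s
        exact congrFun h2 s
      · rw [Fin.sum_univ_succ] at hσ
        rw [← hσ]
        have : q ^ (i' - i) * q ^ i = q ^ i' := by rw [← pow_add]; congr 1; omega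
        simp only [← pow_mul, this]
    obtain ⟨τ0, σ0, hτ0, hrel0⟩ := hfail i0 le_rfl
    obtain ⟨fr, hfr⟩ := fr_exists (k := k) B i0
    rw [← hq] at hfr
    have hsc : ∀ s, ∃ c : k, σ0 s = c • τ0 := by
      intro s
      apply root_lemma h _ _ hτ0
      intro m
      obtain ⟨τ, σ, hτ, hrel⟩ := hfail (i0 + m) (by omega)
      refine ⟨σ s, τ, hτ, ?_⟩
      have h1 := hi0 i0 le_rfl (fun s => σ0 s * τ ^ (q ^ m) - σ s ^ (q ^ m) * τ0) ?_
      · have := congrFun h1 s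
        exact sub_eq_zero.1 this
      · have hp : ∀ x : B, x ^ q ^ (i0 + m) = (x ^ q ^ m) ^ q ^ i0 := by
          intro x; rw [← pow_mul, ← pow_add, add_comm]
        simp only [hp] at hrel
        simp only [← hfr] at hrel hrel0 ⊢
        simp only [map_sub, map_mul]
        have e1 : ∑ x, a x.succ * (fr (σ0 x) * fr (τ ^ q ^ m) - fr (σ x ^ q ^ m) * fr τ0) =
            (∑ x, a x.succ * fr (σ0 x)) * fr (τ ^ q ^ m) - (∑ x, a x.succ * fr (σ x ^ q ^ m)) * fr τ0 := by
          rw [Finset.sum_mul, Finset.sum_mul, ← Finset.sum_sub_distrib]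
          exact Finset.sum_congr rfl fun _ _ => by ring
        rw [e1]
        linear_combination fr (τ ^ q ^ m) * hrel0 - fr τ0 * hrel
    choose c hc using hsc
    have hrel1 : (a 0 + ∑ s, c s • a s.succ) * τ0 ^ (q ^ i0) = 0 := by
      rw [← hrel0, add_mul, Finset.sum_mul]
      congr 1
      refine Finset.sum_congr rfl fun s _ => ?_
      rw [← hfr, ← hfr, hc, map_smul, smul_mul_assoc, mul_smul_comm]
    rcases mul_eq_zero.1 hrel1 with h1 | h1
    · have := Fintype.linearIndependent_iff.1 ha (Fin.cons 1 c) (by rw [Fin.sum_univ_succ]; simpa using h1) 0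
      simp at this
    · exact hτ0 ((pow_eq_zero_iff (hq0 _)).1 h1)

lemma bound [Fintype k] [IsPrincipalIdealRing B] (h : DegData k B) :
    ∃ (D K0 : ℕ) (w : ℕ → B), 0 < D ∧ (∀ x, dg k (w x) ≤ x + K0) ∧
      (∀ M : ℕ, LinearIndependent k (fun x : Fin M => w x)) ∧
      ∀ (j1 j2 r n M : ℕ) (a : Fin r → B), 1 ≤ j1 + j2 → (∀ i, dg k (a i) ≤ n) →
      (∀ σ : Fin r → B, ∑ i, a i * σ i ^ (Fintype.card k ^ j2) = 0 → σ = 0) →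
      (D - 1) * (n * Fintype.card k ^ j1 + M + K0) < r * M →
      Fintype.card k ^ (j1 + j2) * D ≤ (monDeg h).NN (j1 + j2) + n + (M + K0) * Fintype.card k ^ j2 + K0 := by
  obtain ⟨f, θ, c, P, P1, δ, F, hδ⟩ := exists_frame h
  obtain ⟨Cst, hst⟩ := stepanov h F
  set K0 := Cst + dg k (δ f) + dg k c + dg k f * dg k θ
  refine ⟨dg k f, K0, ww k f θ, F.pos, ?_, ?_, ?_⟩
  · intro x
    refine (dg_ww h f θ F.pos x).trans ?_
    omega
  · intro M
    rw [Fintype.linearIndependent_iff]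
    intro g hg i
    exact congrFun (ww_indep F g hg) i
  · intro j1 j2 r n M a hj ha hind hlt
    obtain ⟨t, ht0, htd, htp⟩ := hst j1 j2 r n M a ha hind (lt_of_le_of_lt (by gcongr; omega) hlt)
    have := core h f c t δ F.pos hδ F.cne ht0 (j1 + j2) hj htp
    have h2 : (M + Cst) * Fintype.card k ^ j2 ≤ (M + K0) * Fintype.card k ^ j2 := by gcongr; omega
    omega

lemma NN_pos [Fintype k] [IsPrincipalIdealRing B] (h : DegData k B) :
    ∃ j0 : ℕ, ∀ j, j0 ≤ j → 0 < (monDeg h).NN j := by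
  obtain ⟨D, K0, w, hD, hw, hwi, hb⟩ := bound h
  set q := Fintype.card k with hq
  have hq2 : 1 < q := Fintype.one_lt_card
  set T := (D - 1) * (K0 + (D - 1)) + (D - 1) * K0 + 1 with hT
  set r := (D - 1) + 4 * T with hr
  set n := r + K0 with hn
  obtain ⟨i0, hi0⟩ := frob_indep h r _ (hwi r)
  set j1 := 2 * K0 + 4 with hj1
  have hR1 : 2 * K0 + 4 < q ^ j1 := Nat.lt_pow_self hq2
  set R1 := q ^ j1 with hR1'
  refine ⟨j1 + i0 + (n + K0), fun j hj => ?_⟩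
  have hR2 : j - j1 < q ^ (j - j1) := Nat.lt_pow_self hq2
  have := hb j1 (j - j1) r n ((D - 1) * R1 + R1 / 2) (fun x => w x) (by omega)
    (fun i => (hw i).trans (by have := i.2; omega)) (hi0 _ (by omega)) ?_
  · rw [pow_add, show j1 + (j - j1) = j by omega, ← hR1'] at this
    set R2 := q ^ (j - j1)
    obtain ⟨D', rfl⟩ : ∃ D', D = D' + 1 := ⟨D - 1, by omega⟩
    simp only [Nat.add_sub_cancel] at this
    have h2 : R1 / 2 * 2 ≤ R1 := Nat.div_mul_le_self _ _
    by_contra h0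
    have h0' : (monDeg h).NN j = 0 := by omega
    rw [h0'] at this
    have h3 : R1 * R2 ≤ n + (R1 / 2 + K0) * R2 + K0 := by nlinarith
    have h4 : R1 / 2 + K0 + 1 ≤ R1 := by omega
    have h5 : (R1 / 2 + K0 + 1) * R2 ≤ R1 * R2 := Nat.mul_le_mul_right _ h4
    have h6 : R2 ≤ n + K0 := by nlinarith
    omega
  · have h1 : 4 * (R1 / 2) ≥ R1 := by omega
    rw [← hR1']
    set d := D - 1
    set H := R1 / 2
    have hTR : d * (K0 + d) * R1 + d * K0 < T * R1 := by
      rw [hT]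
      have : d * K0 ≤ d * K0 * R1 := Nat.le_mul_of_pos_right _ (by omega)
      nlinarith
    have e1 : T * R1 ≤ T * (4 * H) := Nat.mul_le_mul_left _ h1
    have : d * (n * R1 + (d * R1 + H) + K0) = d * r * R1 + (d * (K0 + d) * R1 + d * K0) + d * H := by
      rw [hn]; ring
    rw [this]
    have : r * (d * R1 + H) = d * r * R1 + T * (4 * H) + d * H := by
      rw [hr]; ring
    rw [this]
    omega

lemma H_cofinite [Fintype k] [IsPrincipalIdealRing B] (h : DegData k B) :
    ∃ c0 : ℕ, ∀ n, c0 ≤ n → ∃ b : B, b ≠ 0 ∧ dg k b = n := by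
  obtain ⟨j0, hj0⟩ := NN_pos h
  have hex : ∀ j, j0 ≤ j → ∃ b : B, b ≠ 0 ∧ dg k b ∣ j := by
    intro j hj
    have h1 := hj0 j hj
    unfold MonDeg.NN at h1
    obtain ⟨P, hP, hP0⟩ := Finset.exists_ne_zero_of_sum_ne_zero h1.ne'
    rw [Finset.mem_filter, MonDeg.mem_pr] at hP
    obtain ⟨p, rfl⟩ := Associates.mk_surjective P
    rw [dA_mk h, Associates.prime_mk] at hP
    exact ⟨p, hP.1.1.ne_zero, hP.2⟩
  obtain ⟨b1, hb1, hd1⟩ := hex (j0 + 1) (by omega)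
  obtain ⟨b2, hb2, hd2⟩ := hex (j0 + 2) (by omega)
  have hcop : Nat.Coprime (dg k b1) (dg k b2) := by
    apply Nat.Coprime.coprime_dvd_left hd1
    apply Nat.Coprime.coprime_dvd_right hd2
    exact (Nat.coprime_self_add_right (m := j0 + 1) (n := 1)).2 (Nat.coprime_one_right _)
  refine ⟨dg k b1 * dg k b2, fun n hn => ?_⟩
  obtain ⟨x, y, hxy⟩ : ∃ x y : ℕ, x * dg k b1 + y * dg k b2 = n := by
    have h1 : 0 < dg k b1 := Nat.pos_of_dvd_of_pos hd1 (by omega)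
    have h2 : 0 < dg k b2 := Nat.pos_of_dvd_of_pos hd2 (by omega)
    have hlt := Nat.chineseRemainder_lt_mul hcop 0 n h1.ne' h2.ne'
    obtain ⟨hz1, hz2⟩ := (Nat.chineseRemainder hcop 0 n).2
    obtain ⟨x, hx⟩ := (Nat.modEq_zero_iff_dvd).1 hz1
    obtain ⟨y, hy⟩ := (Nat.modEq_iff_dvd' (by omega)).1 hz2
    refine ⟨x, y, ?_⟩
    rw [mul_comm x, mul_comm y, ← hx, ← hy]
    omega
  refine ⟨b1 ^ x * b2 ^ y, mul_ne_zero (pow_ne_zero _ hb1) (pow_ne_zero _ hb2), ?_⟩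
  rw [h.mul _ _ (pow_ne_zero _ hb1) (pow_ne_zero _ hb2), h.dg_pow, h.dg_pow, hxy]
end cofin
end Drin

namespace Drin
section gr
variable {k B : Type*} [Field k] [CommRing B] [IsDomain B] [Algebra k B]

lemma sum_distinct (h : DegData k B) {ι : Type*} (s : Finset ι) (g : ι → B)
    (hd : ∀ i ∈ s, ∀ j ∈ s, g i ≠ 0 → g j ≠ 0 → dg k (g i) = dg k (g j) → i = j)
    (h0 : ∑ i ∈ s, g i = 0) : ∀ i ∈ s, g i = 0 := by
  classical
  by_contra hcon
  push Not at hcon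
  obtain ⟨i1, hi1, hgi1⟩ := hcon
  set t := s.filter (fun i => g i ≠ 0) with ht
  obtain ⟨i, hi, hmax⟩ := t.exists_max_image (fun i => dg k (g i)) ⟨i1, by simp [ht, hi1, hgi1]⟩
  have hsum : ∑ i ∈ t, g i = 0 := by rw [ht, Finset.sum_filter_ne_zero, h0]
  rw [← Finset.add_sum_erase _ _ hi] at hsum
  have hi' := (Finset.mem_filter.1 hi)
  have hlt : ∀ j ∈ t.erase i, dg k (g j) < dg k (g i) := by
    intro j hj
    have hj1 := Finset.mem_of_mem_erase hj
    have hj' := Finset.mem_filter.1 hj1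
    refine lt_of_le_of_ne (hmax j hj1) fun he => ?_
    exact Finset.ne_of_mem_erase hj (hd j hj'.1 i hi'.1 hj'.2 hi'.2 he)
  rcases Nat.eq_zero_or_pos (dg k (g i)) with hz | hpos
  · have : t.erase i = ∅ := by
      apply Finset.eq_empty_of_forall_notMem
      intro j hj
      have := hlt j hj
      omega
    rw [this, Finset.sum_empty, add_zero] at hsum
    exact hi'.2 hsum
  · have h1 := h.dg_sum_le (t.erase i) g (dg k (g i) - 1) (fun j hj => by have := hlt j hj; omega)
    have h2 := h.dg_add_eq (g i) (∑ j ∈ t.erase i, g j) (by omega)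
    rw [hsum, h.zero] at h2
    omega

lemma gr1 [Fintype k] [IsPrincipalIdealRing B] (h : DegData k B) (a b : B) (ha : a ≠ 0) (hb : b ≠ 0)
    (hab : dg k a = dg k b) : ∃ c : k, a - c • b = 0 ∨ dg k (a - c • b) < dg k a := by
  by_contra hcon
  push Not at hcon
  have hcomb : ∀ x y : k, (x ≠ 0 ∨ y ≠ 0) → x • a + y • b ≠ 0 ∧ dg k (x • a + y • b) = dg k a := by
    intro x y hxy
    by_cases hx : x = 0
    · subst hx
      have hy : y ≠ 0 := by simpa using hxy
      rw [zero_smul, zero_add, h.dg_smul _ hy]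
      exact ⟨smul_ne_zero hy hb, hab.symm⟩
    · have e : x • a + y • b = x • (a - (-(x⁻¹ * y)) • b) := by
        rw [smul_sub, smul_smul]
        rw [show x * -(x⁻¹ * y) = -y by field_simp]
        rw [neg_smul, sub_neg_eq_add]
      obtain ⟨h1, h2⟩ := hcon (-(x⁻¹ * y))
      rw [e, h.dg_smul _ hx]
      refine ⟨smul_ne_zero hx h1, le_antisymm ?_ h2⟩
      refine (h.dg_sub _ _).trans (max_le le_rfl ?_)
      exact (h.dg_smul_le _ _).trans hab.ge
  obtain ⟨c0, hc0⟩ := H_cofinite h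
  obtain ⟨f, hf⟩ := h.pos
  choose s hs0 hs using fun n : ℕ => hc0 (c0 + n) (by omega)
  set N := dg k a + c0 + dg k f + 1 with hN
  obtain ⟨hfin, hle⟩ := h.Le_fin f hf (dg k a + c0 + N)
  let φ : (Fin N → k × k) →ₗ[k] h.Le (dg k a + c0 + N) :=
    { toFun := fun p => ⟨∑ n : Fin N, ((p n).1 • a + (p n).2 • b) * s n, by
        rw [h.mem_Le]
        apply h.dg_sum_le
        intro i _
        by_cases hp : (p i).1 ≠ 0 ∨ (p i).2 ≠ 0
        · refine (h.mul_le _ _).trans ?_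
          rw [(hcomb _ _ hp).2, hs]
          have := i.2
          omega
        · push Not at hp
          rw [hp.1, hp.2]
          simp [h.zero]⟩
      map_add' := by
        intro p p'
        ext
        simp only [Pi.add_apply, Prod.fst_add, Prod.snd_add, Submodule.coe_add]
        rw [← Finset.sum_add_distrib]
        refine Finset.sum_congr rfl fun i _ => ?_
        simp only [add_smul]
        ring
      map_smul' := by
        intro c p
        ext
        simp only [Pi.smul_apply, Prod.smul_fst, Prod.smul_snd, Submodule.coe_smul, RingHom.id_apply,
          Finset.smul_sum, smul_eq_mul, mul_smul, ← smul_mul_assoc, ← smul_add] }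
  have hinj : Function.Injective φ := by
    rw [← LinearMap.ker_eq_bot, LinearMap.ker_eq_bot']
    intro p hp
    have hp' : ∑ n : Fin N, ((p n).1 • a + (p n).2 • b) * s n = 0 := congrArg Subtype.val hp
    have hd : ∀ i : Fin N, ((p i).1 • a + (p i).2 • b) * s i ≠ 0 →
        dg k (((p i).1 • a + (p i).2 • b) * s i) = dg k a + (c0 + i) := by
      intro i hi
      have h1 := left_ne_zero_of_mul hi
      have hp : (p i).1 ≠ 0 ∨ (p i).2 ≠ 0 := by
        by_contra hno
        push Not at hno
        apply h1
        simp [hno.1, hno.2]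
      rw [h.mul _ _ h1 (hs0 _), (hcomb _ _ hp).2, hs]
    have := sum_distinct h _ _ (fun i _ j _ hi hj hij => by
      rw [hd i hi, hd j hj] at hij
      exact Fin.ext (by omega)) hp'
    funext i
    have h1 := this i (Finset.mem_univ i)
    have h2 := (mul_eq_zero.1 h1).resolve_right (hs0 _)
    by_contra hno
    refine (hcomb (p i).1 (p i).2 ?_).1 h2
    by_contra hno'
    push Not at hno'
    exact hno (Prod.ext hno'.1 hno'.2)
  have h1 := LinearMap.finrank_le_finrank_of_injective hinj
  rw [Module.finrank_pi_fintype] at h1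
  simp at h1
  omega

/-- The degree semigroup. -/
def HH (k B : Type*) [Field k] [CommRing B] [Algebra k B] (n : ℕ) : Prop :=
  ∃ b : B, b ≠ 0 ∧ dg k b = n

open Classical in
/-- The semigroup counting function. -/
noncomputable def hc (k B : Type*) [Field k] [CommRing B] [Algebra k B] (n : ℕ) : ℕ :=
  ((Finset.range n).filter (HH k B)).card

lemma S_finite [Finite k] (h : DegData k B) (n : ℕ) : {b : B | b = 0 ∨ dg k b < n}.Finite := by
  refine (Le_finite h n).subset ?_
  rintro b (rfl | hb)
  · simp [h.zero]
  · exact le_of_lt hb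

lemma S_card [Fintype k] [IsPrincipalIdealRing B] (h : DegData k B) (n : ℕ) :
    {b : B | b = 0 ∨ dg k b < n}.ncard = Fintype.card k ^ hc k B n := by
  classical
  induction n with
  | zero => simp [hc]
  | succ n ih =>
    have hhc : hc k B (n + 1) = hc k B n + if HH k B n then 1 else 0 := by
      unfold hc
      rw [Finset.range_add_one, Finset.filter_insert]
      split_ifs with h1
      · rw [Finset.card_insert_of_notMem (by simp)]
      · rfl
    by_cases hn : HH k B n
    · rw [hhc, if_pos hn, pow_succ, ← ih]
      obtain ⟨e, he0, he⟩ := hn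
      have key : Set.ncard ({b : B | b = 0 ∨ dg k b < n} ×ˢ (Set.univ : Set k)) =
          {b : B | b = 0 ∨ dg k b < n + 1}.ncard := by
        refine Set.ncard_congr (fun p _ => p.1 + p.2 • e) ?_ ?_ ?_
        · rintro ⟨b, c⟩ ⟨hb, _⟩
          right
          have h1 : dg k b ≤ n := by
            rcases hb with hb | hb
            · simp only at hb; rw [hb, h.zero]; omega
            · exact le_of_lt hb
          have h2 : dg k (c • e) ≤ n := (h.dg_smul_le _ _).trans he.le
          exact Nat.lt_succ_of_le ((h.add _ _).trans (max_le h1 h2))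
        · rintro ⟨b, c⟩ ⟨b', c'⟩ ⟨hb, _⟩ ⟨hb', _⟩ heq
          simp only at heq hb hb'
          have e1 : b - b' = (c' - c) • e := by
            rw [sub_smul]; linear_combination heq
          have hcc : c' - c = 0 := by
            by_contra hne
            have h1 : dg k (b - b') = n := by rw [e1, h.dg_smul _ hne, he]
            have hne0 : b - b' ≠ 0 := by rw [e1]; exact smul_ne_zero hne he0
            rcases hb with hb | hb
            · rcases hb' with hb' | hb'
              · rw [hb, hb'] at hne0; simp at hne0
              · rw [hb, zero_sub, h.dg_neg] at h1
                omega
            · rcases hb' with hb' | hb'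
              · rw [hb', sub_zero] at h1
                omega
              · have := h.dg_sub b b'
                rw [h1] at this
                have := max_lt hb hb'
                omega
          rw [hcc, zero_smul] at e1
          rw [sub_eq_zero.1 e1, sub_eq_zero.1 hcc]
        · intro b hb
          by_cases hbn : b ≠ 0 ∧ dg k b = n
          · obtain ⟨c, hc⟩ := gr1 h b e hbn.1 he0 (hbn.2.trans he.symm)
            rw [hbn.2] at hc
            exact ⟨(b - c • e, c), ⟨hc, trivial⟩, by simp⟩
          · refine ⟨(b, 0), ⟨?_, trivial⟩, by simp⟩
            rcases hb with hb | hb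
            · exact Or.inl hb
            · by_cases hb0 : b = 0
              · exact Or.inl hb0
              · right
                have : dg k b ≠ n := fun hh => hbn ⟨hb0, hh⟩
                show dg k b < n
                omega
      rw [← key, Set.ncard_prod, Set.ncard_univ, Nat.card_eq_fintype_card]
    · rw [hhc, if_neg hn, add_zero, ← ih]
      congr 1
      ext b
      simp only [Set.mem_setOf_eq]
      constructor
      · rintro (hb | hb)
        · exact Or.inl hb
        · by_cases hb0 : b = 0
          · exact Or.inl hb0
          · right
            have : dg k b ≠ n := fun hh => hn ⟨b, hb0, hh⟩
            omega
      · rintro (hb | hb)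
        · exact Or.inl hb
        · right; omega

lemma lev_card [Fintype k] [IsPrincipalIdealRing B] (h : DegData k B) (n : ℕ) (hn : HH k B n) :
    ((monDeg h).lev n).card = Fintype.card k ^ hc k B n := by
  classical
  rw [← S_card h, ← Set.ncard_coe_finset]
  symm
  obtain ⟨e, he0, he⟩ := hn
  have hdeg : ∀ b : B, (b = 0 ∨ dg k b < n) → e + b ≠ 0 ∧ dg k (e + b) = n := by
    rintro b (rfl | hb)
    · rw [add_zero]; exact ⟨he0, he⟩
    · have h1 := h.dg_add_eq e b (by omega)
      refine ⟨fun h0 => ?_, h1.trans he⟩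
      rw [h0, h.zero] at h1
      omega
  refine Set.ncard_congr (fun b _ => Associates.mk (e + b)) ?_ ?_ ?_
  · intro b hb
    rw [Finset.mem_coe, MonDeg.mem_lev, dA_mk h]
    exact ⟨Associates.mk_ne_zero.2 (hdeg b hb).1, (hdeg b hb).2⟩
  · intro b b' hb hb' heq
    obtain ⟨u, hu⟩ := Associates.mk_eq_mk_iff_associated.1 heq
    have h1 := (h.isUnit_iff (u : B) u.ne_zero).1 u.isUnit
    obtain ⟨c, hc⟩ := (h.const _).1 h1
    rw [← hc] at hu
    have e1 : (c - 1) • e = b' - c • b := by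
      rw [sub_smul, one_smul, Algebra.smul_def, Algebra.smul_def]
      linear_combination hu
    have hcc : c - 1 = 0 := by
      by_contra hne
      have h2 : dg k (b' - c • b) = n := by rw [← e1, h.dg_smul _ hne, he]
      have hne0 : b' - c • b ≠ 0 := by rw [← e1]; exact smul_ne_zero hne he0
      rcases hb' with hb' | hb'
      · rcases hb with hb | hb
        · rw [hb, hb'] at hne0; simp at hne0
        · rw [hb', zero_sub, h.dg_neg] at h2
          have := h.dg_smul_le c b
          omega
      · rcases hb with hb | hb
        · rw [hb, smul_zero, sub_zero] at h2
          omega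
        · have := h.dg_sub b' (c • b)
          rw [h2] at this
          have := max_lt hb' ((h.dg_smul_le c b).trans_lt hb)
          omega
    rw [sub_eq_zero.1 hcc, sub_self, zero_smul, one_smul] at e1
    exact (sub_eq_zero.1 e1.symm).symm
  · intro a ha
    rw [Finset.mem_coe, MonDeg.mem_lev] at ha
    obtain ⟨b, rfl⟩ := Associates.mk_surjective a
    rw [dA_mk h] at ha
    have hb0 : b ≠ 0 := Associates.mk_ne_zero.1 ha.1
    obtain ⟨c, hc⟩ := gr1 h b e hb0 he0 (ha.2.trans he.symm)
    have hc0 : c ≠ 0 := by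
      rintro rfl
      rw [zero_smul, sub_zero] at hc
      rcases hc with hc | hc
      · exact hb0 hc
      · omega
    refine ⟨c⁻¹ • (b - c • e), ?_, ?_⟩
    · rcases hc with hc | hc
      · left; rw [hc, smul_zero]
      · right
        show dg k _ < n
        rw [h.dg_smul _ (inv_ne_zero hc0)]
        omega
    · rw [smul_sub, smul_smul, inv_mul_cancel₀ hc0, one_smul, add_sub_cancel,
        Associates.mk_eq_mk_iff_associated]
      refine ⟨(Units.mk0 c hc0).map (algebraMap k B).toMonoidHom, ?_⟩
      rw [Algebra.smul_def]
      have : algebraMap k B c⁻¹ * algebraMap k B c = 1 := by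
        rw [← map_mul, inv_mul_cancel₀ hc0, map_one]
      show algebraMap k B c⁻¹ * b * algebraMap k B c = b
      linear_combination b * this
end gr
end Drin

namespace Drin
section final
variable {k B : Type*} [Field k] [CommRing B] [IsDomain B] [Algebra k B]

lemma HH_zero (h : DegData k B) : HH k B 0 := ⟨1, one_ne_zero, h.dg_one⟩

lemma HH_add (h : DegData k B) (m n : ℕ) (hm : HH k B m) (hn : HH k B n) : HH k B (m + n) := by
  obtain ⟨a, ha, rfl⟩ := hm
  obtain ⟨b, hb, rfl⟩ := hn
  exact ⟨a * b, mul_ne_zero ha hb, h.mul a b ha hb⟩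

lemma hc_ge (c : ℕ) (hcc : ∀ n, c ≤ n → HH k B n) (n : ℕ) : n ≤ hc k B n + c := by
  classical
  unfold hc
  have h1 : Finset.Ico c n ⊆ (Finset.range n).filter (HH k B) := by
    intro i hi
    rw [Finset.mem_Ico] at hi
    rw [Finset.mem_filter, Finset.mem_range]
    exact ⟨hi.2, hcc i hi.1⟩
  have := Finset.card_le_card h1
  rw [Nat.card_Ico] at this
  omega

lemma two_hc (h : DegData k B) (c : ℕ) (hc1 : c = 0 ∨ ¬ HH k B (c - 1)) : 2 * hc k B c ≤ c := by
  classical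
  rcases hc1 with rfl | hc1
  · simp [hc]
  · have h1 : ((Finset.range c).filter (HH k B)).card ≤ ((Finset.range c).filter (fun i => ¬ HH k B i)).card := by
      apply Finset.card_le_card_of_injOn (fun i => c - 1 - i)
      · intro i hi
        rw [Finset.mem_coe, Finset.mem_filter, Finset.mem_range] at hi
        rw [Finset.mem_coe, Finset.mem_filter, Finset.mem_range]
        refine ⟨by show c - 1 - i < c; omega, fun hh => hc1 ?_⟩
        have := HH_add h _ _ hi.2 hh
        rwa [show i + (c - 1 - i) = c - 1 by omega] at this
      · intro i hi j hj hij
        rw [Finset.mem_coe, Finset.mem_filter, Finset.mem_range] at hi hj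
        simp only at hij
        omega
    have h2 := Finset.card_filter_add_card_filter_not (s := Finset.range c) (HH k B)
    rw [Finset.card_range] at h2
    unfold hc
    omega

lemma rh [Fintype k] [IsPrincipalIdealRing B] (h : DegData k B) :
    ∃ C : ℕ, ∀ j, 1 ≤ j → Fintype.card k ^ j ≤ (monDeg h).NN j + C * Fintype.card k ^ ((j + 1) / 2) := by
  classical
  obtain ⟨D, K0, w, hD, hw, hwi, hb⟩ := bound h
  obtain ⟨c, hcc⟩ := H_cofinite h
  set q := Fintype.card k with hq
  have hq2 : 1 < q := Fintype.one_lt_card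
  obtain ⟨d, rfl⟩ : ∃ d, D = d + 1 := ⟨D - 1, by omega⟩
  simp only [Nat.add_sub_cancel] at hb
  set M' := c * d + d * d + d + 1 with hM'
  set T := c * M' + d * M' + d * K0 with hT
  refine ⟨1 + M' + 2 * K0 + T, fun j hj => ?_⟩
  set R2 := q ^ ((j + 1) / 2) with hR2
  set R1 := q ^ (j / 2) with hR1
  have hR12 : R1 ≤ R2 := Nat.pow_le_pow_right (by omega) (by omega)
  have hR1p : 0 < R1 := pow_pos (by omega) _
  have hjj : R1 * R2 = q ^ j := by rw [hR1, hR2, ← pow_add]; congr 1; omega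
  rw [← hjj]
  by_cases hsm : R2 ≤ T
  · have : R1 * R2 ≤ T * R2 := Nat.mul_le_mul_right _ (hR12.trans hsm)
    nlinarith
  push Not at hsm
  set t := (Finset.range R2).filter (HH k B) with ht
  have hr : R2 ≤ t.card + c := hc_ge c hcc R2
  have hmem : ∀ i : Fin t.card, (t.equivFin.symm i : ℕ) ∈ t := fun i => (t.equivFin.symm i).2
  have hmem' : ∀ i : Fin t.card, (t.equivFin.symm i : ℕ) < R2 ∧ HH k B (t.equivFin.symm i) := by
    intro i
    have := hmem i
    have h1 := Finset.mem_filter.1 this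
    exact ⟨Finset.mem_range.1 h1.1, h1.2⟩
  choose a ha0 ha using fun i => (hmem' i).2
  have hmain := hb (j / 2) ((j + 1) / 2) t.card R2 (d * R1 + M') a (by omega)
    (fun i => by rw [ha]; exact (hmem' i).1.le) ?_ ?_
  · rw [show j / 2 + (j + 1) / 2 = j by omega, ← hR2, ← hjj] at hmain
    have hK : K0 ≤ K0 * R2 := Nat.le_mul_of_pos_right _ (by omega)
    have e : R1 * R2 * (d + 1) = R1 * R2 + d * R1 * R2 := by ring
    have e2 : (d * R1 + M' + K0) * R2 = d * R1 * R2 + M' * R2 + K0 * R2 := by ring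
    have e3 : (1 + M' + 2 * K0 + T) * R2 = R2 + M' * R2 + 2 * (K0 * R2) + T * R2 := by ring
    rw [e, e2] at hmain
    rw [e3]
    omega
  · intro σ hσ
    rw [← hR2] at hσ
    have := sum_distinct h _ _ (fun i _ i' _ hi hi' hii => by
      have h1 := left_ne_zero_of_mul hi
      have h2 := right_ne_zero_of_mul hi
      have h1' := left_ne_zero_of_mul hi'
      have h2' := right_ne_zero_of_mul hi'
      rw [h.mul _ _ h1 h2, h.mul _ _ h1' h2', h.dg_pow, h.dg_pow, ha, ha] at hii
      have h3 := congrArg (· % R2) hii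
      simp only [Nat.add_mul_mod_self_left, Nat.mod_eq_of_lt (hmem' i).1, Nat.mod_eq_of_lt (hmem' i').1] at h3
      exact t.equivFin.symm.injective (Subtype.ext h3)) hσ
    funext i
    have h1 := (mul_eq_zero.1 (this i (Finset.mem_univ i))).resolve_left (ha0 i)
    exact (pow_eq_zero_iff (by omega)).1 h1
  · rw [← hR1]
    have h1 : R2 * (d * R1 + M') ≤ (t.card + c) * (d * R1 + M') := Nat.mul_le_mul_right _ hr
    have h2 : (c * d + d * d + d) * R1 ≤ (c * d + d * d + d) * R2 := Nat.mul_le_mul_left _ hR12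
    have h3 : R2 * M' = (c * d + d * d + d) * R2 + R2 := by rw [hM']; ring
    nlinarith

lemma cond_zero [Fintype k] [IsPrincipalIdealRing B] (h : DegData k B) (hq5 : 5 ≤ Fintype.card k) :
    ∀ n, HH k B n := by
  classical
  have hex : ∃ c, ∀ n, c ≤ n → HH k B n := H_cofinite h
  set c := Nat.find hex with hcdef
  have hcc : ∀ n, c ≤ n → HH k B n := Nat.find_spec hex
  have hc1 : c = 0 ∨ ¬ HH k B (c - 1) := by
    by_contra hcon
    push Not at hcon
    refine Nat.find_min hex (m := c - 1) (by omega) fun n hn => ?_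
    rcases Nat.lt_or_ge n c with h1 | h1
    · rw [show n = c - 1 by omega]; exact hcon.2
    · exact hcc n h1
  have h2 := two_hc h c hc1
  obtain ⟨C, hC⟩ := rh h
  set q := Fintype.card k with hq
  have hqR : (5 : ℝ) ≤ (q : ℝ) := by exact_mod_cast hq5
  set s := Real.sqrt (q : ℝ) with hs
  have hss : s * s = q := Real.mul_self_sqrt (by linarith)
  have hs0 : 0 ≤ s := Real.sqrt_nonneg _
  have hs2 : 2 < s := by nlinarith
  have hlev : ∀ n, c ≤ n → ((monDeg h).lev n).card = q ^ hc k B n := fun n hn => lev_card h n (hcc n hn)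
  have hsucc : ∀ n, c ≤ n → hc k B (n + 1) = hc k B n + 1 := by
    intro n hn
    unfold hc
    rw [Finset.range_add_one, Finset.filter_insert, if_pos (hcc n hn), Finset.card_insert_of_notMem (by simp)]
  have hmain := analytic_core (q : ℝ) (by linarith)
    (fun n => ((if n = 0 then 0 else (monDeg h).NN n : ℕ) : ℝ)) (fun n => (((monDeg h).lev n).card : ℝ)) c (C * q)
    ?_ ?_ ?_ ?_ ?_ ?_
  · rw [hlev c le_rfl, ← hs] at hmain
    push_cast at hmain
    have h3 : (q : ℝ) ^ hc k B c ≤ s ^ c := by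
      rw [← hss, ← pow_two, ← pow_mul]
      exact pow_le_pow_right₀ (by linarith) h2
    have h4 : (1 - 1 / s) ^ c ≤ s ^ c / (q : ℝ) ^ c :=
      hmain.trans (div_le_div_of_nonneg_right h3 (by positivity))
    have h5 : (s - 1) ^ c ≤ 1 := by
      have e1 : (s - 1) ^ c = s ^ c * (1 - 1 / s) ^ c := by
        rw [← mul_pow]; congr 1; field_simp
      have e2 : s ^ c * (s ^ c / (q : ℝ) ^ c) = 1 := by
        rw [← hss, mul_pow]; field_simp
      rw [e1]
      exact (mul_le_mul_of_nonneg_left h4 (by positivity)).trans e2.le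
    have h6 : c = 0 := by
      by_contra hne
      have := one_lt_pow₀ (show (1:ℝ) < s - 1 by linarith) hne
      linarith
    intro n
    exact hcc n (by omega)
  · rw [lev_card h 0 (HH_zero h)]
    simp [hc]
  · simp
  · intro n
    have := (monDeg h).count_rec n
    exact_mod_cast this
  · intro n hn
    rw [if_neg (by omega)]
    have h3 : (q : ℝ) ^ n ≤ (monDeg h).NN n + C * (q : ℝ) ^ ((n + 1) / 2) := by exact_mod_cast hC n hn
    have h4 : (q : ℝ) ^ ((n + 1) / 2) ≤ q * s ^ n := by
      rw [← hss, ← pow_two, ← pow_mul, ← pow_add]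
      exact pow_le_pow_right₀ (by linarith) (by omega)
    have h5 := mul_le_mul_of_nonneg_left h4 (Nat.cast_nonneg (α := ℝ) C)
    rw [← hs]
    push_cast
    nlinarith
  · intro n hn
    rw [hlev n hn, hlev (n + 1) (by omega), hsucc n hn, pow_succ]
    push_cast
    ring
  · positivity

lemma poly_of_deg [Fintype k] [IsPrincipalIdealRing B] (h : DegData k B) (hq5 : 5 ≤ Fintype.card k) :
    Nonempty (B ≃ₐ[k] k[X]) := by
  obtain ⟨x, hx0, hx⟩ := cond_zero h hq5 1
  have hsurj : ∀ n, ∀ b : B, (b = 0 ∨ dg k b < n) → ∃ p : k[X], aeval x p = b := by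
    intro n
    induction n with
    | zero =>
      rintro b (rfl | hb)
      · exact ⟨0, map_zero _⟩
      · omega
    | succ n ih =>
      rintro b (rfl | hb)
      · exact ⟨0, map_zero _⟩
      by_cases hb0 : b = 0
      · exact ⟨0, by simp [hb0]⟩
      have hd : dg k (x ^ dg k b) = dg k b := by rw [h.dg_pow, hx, mul_one]
      obtain ⟨c, hc⟩ := gr1 h b (x ^ dg k b) hb0 (pow_ne_zero _ hx0) hd.symm
      obtain ⟨p, hp⟩ := ih (b - c • x ^ dg k b) (hc.imp_right fun h1 => by omega)
      refine ⟨p + c • X ^ dg k b, ?_⟩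
      rw [map_add, hp, map_smul, map_pow, aeval_X, sub_add_cancel]
  refine ⟨(AlgEquiv.ofBijective (aeval x : k[X] →ₐ[k] B) ⟨?_, fun b => ?_⟩).symm⟩
  · rw [injective_iff_map_eq_zero]
    intro p hp
    by_contra hp0
    exact (h.dg_aeval x (by omega) p hp0).1 hp
  · exact hsurj (dg k b + 1) b (Or.inr (by omega))
end final
end Drin

namespace Drin
lemma final (Fq : Type*) [Field Fq] [Fintype Fq] (hq : 5 ≤ Fintype.card Fq)
    (B : Type*) [CommRing B] [IsDomain B] [Algebra Fq B]
    (hB : IsDrinfeldianDomain Fq B) (hcl : ∀ x : ClassGroup B, x = 1) :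
    Nonempty (B ≃ₐ[Fq] Polynomial Fq) := by
  haveI := hB.isDedekind
  haveI : IsPrincipalIdealRing B := by
    refine ⟨fun I => ?_⟩
    by_cases hI : I = ⊥
    · rw [hI]; exact bot_isPrincipal
    · exact (ClassGroup.mk0_eq_one_iff (mem_nonZeroDivisors_of_ne_zero hI)).1 (hcl _)
  have hmap : ((algebraMap B (FractionRing B)).comp (algebraMap Fq B)) = algebraMap Fq (FractionRing B) :=
    (IsScalarTower.algebraMap_eq Fq B (FractionRing B)).symm
  obtain ⟨V, ⟨hV1, hV2⟩, hV3⟩ := hB.unique_infinite_place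
  have hinf : Inf Fq B V := by
    refine ⟨?_, ?_, ?_, ?_, hB.finiteType⟩
    · intro c; rw [← hmap]; exact hV1 c
    · intro v hv hne
      by_contra hcon
      exact hne (hV3 v ⟨fun c => by rw [hmap]; exact hv c, hcon⟩)
    · push Not at hV2
      exact hV2
    · rintro x ⟨f, hf, hx⟩
      have := hB.algebraicallyClosed x ⟨f, hf, by rw [hmap]; exact hx⟩
      rwa [hmap] at this
  exact poly_of_deg hinf.degData hq
end Drin

/-- For `q ≥ 5`, every Drinfeldian domain over `Fq` with trivial ideal class
group is isomorphic as an `Fq`-algebra to the polynomial ring `Fq[T]`. -/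
theorem drinfeldian_classGroup_trivial_iso_polynomial
    (Fq : Type*) [Field Fq] [Fintype Fq] (hq : 5 ≤ Fintype.card Fq)
    (B : Type*) [CommRing B] [IsDomain B] [Algebra Fq B]
    (hB : IsDrinfeldianDomain Fq B) (hcl : ∀ x : ClassGroup B, x = 1) :
    Nonempty (B ≃ₐ[Fq] Polynomial Fq) := by
  exact Drin.final Fq hq B hB hcl
end

section
/- Let q be a prime power and A = F_q[T]. There exists a finite-index subgroup of SL₂(A) that is not a congruence subgroup; indeed, the set of finite-index non-congruence subgroups of SL₂(A) is uncountable. -/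
open Matrix Polynomial

/-- A subgroup `Γ ≤ SL₂(R)` is a congruence subgroup if it contains the kernel of the
reduction map `SL₂(R) → SL₂(R/I)` for some nonzero ideal `I` of `R`. -/
def IsCongruenceSubgroup {R : Type*} [CommRing R]
    (Γ : Subgroup (Matrix.SpecialLinearGroup (Fin 2) R)) : Prop :=
  ∃ I : Ideal R, I ≠ ⊥ ∧
    MonoidHom.ker (Matrix.SpecialLinearGroup.map (n := Fin 2) (Ideal.Quotient.mk I)) ≤ Γ

namespace NonCong

/-- Upper unipotent matrix. -/
def U {R : Type*} [CommRing R] (f : R) : SpecialLinearGroup (Fin 2) R :=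
  ⟨!![1, f; 0, 1], by simp [det_fin_two]⟩

/-- The Weyl element. -/
def W {R : Type*} [CommRing R] : SpecialLinearGroup (Fin 2) R :=
  ⟨!![0, 1; -1, 0], by simp [det_fin_two]⟩

/-- Diagonal matrix with inverse entries. -/
def D {R : Type*} [CommRing R] (a b : R) (h : a * b = 1) : SpecialLinearGroup (Fin 2) R :=
  ⟨!![a, 0; 0, b], by simp [det_fin_two, h]⟩

lemma U_mul_apply {R : Type*} [CommRing R] (f : R) (g : SpecialLinearGroup (Fin 2) R) :
    (U f * g).1 = !![g.1 0 0 + f * g.1 1 0, g.1 0 1 + f * g.1 1 1; g.1 1 0, g.1 1 1] := by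
  change !![1, f; 0, 1] * g.1 = _
  ext i j; fin_cases i <;> fin_cases j <;> simp [Matrix.mul_apply, Fin.sum_univ_two]

lemma W_mul_apply {R : Type*} [CommRing R] (g : SpecialLinearGroup (Fin 2) R) :
    (W * g).1 = !![g.1 1 0, g.1 1 1; -g.1 0 0, -g.1 0 1] := by
  change !![0, 1; -1, 0] * g.1 = _
  ext i j; fin_cases i <;> fin_cases j <;> simp [Matrix.mul_apply, Fin.sum_univ_two]

lemma W_inv_mul_apply {R : Type*} [CommRing R] (g : SpecialLinearGroup (Fin 2) R) :
    (W⁻¹ * g).1 = !![-g.1 1 0, -g.1 1 1; g.1 0 0, g.1 0 1] := by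
  change adjugate !![0, 1; -1, 0] * g.1 = _
  rw [adjugate_fin_two]
  ext i j; fin_cases i <;> fin_cases j <;> simp [Matrix.mul_apply, Fin.sum_univ_two]

lemma D_mul_apply {R : Type*} [CommRing R] (a b : R) (h) (g : SpecialLinearGroup (Fin 2) R) :
    (D a b h * g).1 = !![a * g.1 0 0, a * g.1 0 1; b * g.1 1 0, b * g.1 1 1] := by
  change !![a, 0; 0, b] * g.1 = _
  ext i j; fin_cases i <;> fin_cases j <;> simp [Matrix.mul_apply, Fin.sum_univ_two]

lemma U_add {R : Type*} [CommRing R] (f g : R) : U (f + g) = U f * U g := by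
  apply Subtype.ext; rw [U_mul_apply]; simp [U, add_comm]

lemma U_zero {R : Type*} [CommRing R] : U (0 : R) = 1 := by
  apply Subtype.ext
  change !![1, 0; 0, 1] = (1 : Matrix (Fin 2) (Fin 2) R)
  rw [one_fin_two]

lemma U_inv {R : Type*} [CommRing R] (f : R) : (U f)⁻¹ = U (-f) := by
  rw [inv_eq_iff_mul_eq_one, ← U_add, add_neg_cancel, U_zero]

section
variable {F : Type*} [Field F]

/-- One step of the Euclidean algorithm. -/
noncomputable def step (g : SpecialLinearGroup (Fin 2) F[X]) : SpecialLinearGroup (Fin 2) F[X] :=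
  W⁻¹ * (U (g.1 0 0 / g.1 1 0))⁻¹ * g

lemma step_10 (g : SpecialLinearGroup (Fin 2) F[X]) : (step g).1 1 0 = g.1 0 0 % g.1 1 0 := by
  have := EuclideanDomain.mod_eq_sub_mul_div (g.1 0 0) (g.1 1 0)
  rw [this]
  rw [step, mul_assoc, W_inv_mul_apply, U_inv, U_mul_apply]
  simp
  ring

lemma step_00 (g : SpecialLinearGroup (Fin 2) F[X]) : (step g).1 0 0 = - g.1 1 0 := by
  rw [step, mul_assoc, W_inv_mul_apply, U_inv, U_mul_apply]
  simp

lemma step_eq (g : SpecialLinearGroup (Fin 2) F[X]) :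
    g = U (g.1 0 0 / g.1 1 0) * W * step g := by
  simp [step, mul_assoc]

lemma det_eq {R : Type*} [CommRing R] (g : SpecialLinearGroup (Fin 2) R) :
    g.1 0 0 * g.1 1 1 - g.1 0 1 * g.1 1 0 = 1 := by
  rw [← det_fin_two, g.2]

open Classical in
/-- The retraction. -/
noncomputable def rho (φ : F[X] →ₗ[F] F) (g : SpecialLinearGroup (Fin 2) F[X]) :
    SpecialLinearGroup (Fin 2) F :=
  if h : g.1 1 0 = 0 then
    ⟨!![(g.1 0 0).coeff 0, φ (g.1 0 1); 0, (g.1 1 1).coeff 0], by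
      have := det_eq g
      rw [h, mul_zero, sub_zero] at this
      simp [det_fin_two, ← mul_coeff_zero, this]⟩
  else U (φ (g.1 0 0 / g.1 1 0)) * W * rho φ (step g)
termination_by (g.1 1 0).degree
decreasing_by
  rw [step_10]
  exact EuclideanDomain.mod_lt _ h

variable (φ : F[X] →ₗ[F] F)

lemma rho_pos (g : SpecialLinearGroup (Fin 2) F[X]) (h : g.1 1 0 = 0) :
    (rho φ g).1 = !![(g.1 0 0).coeff 0, φ (g.1 0 1); 0, (g.1 1 1).coeff 0] := by
  rw [rho]; simp [h]

lemma rho_neg (g : SpecialLinearGroup (Fin 2) F[X]) (h : g.1 1 0 ≠ 0) :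
    rho φ g = U (φ (g.1 0 0 / g.1 1 0)) * W * rho φ (step g) := by
  conv_lhs => rw [rho]
  simp [h]

/-- Entries of a matrix with vanishing lower-left entry are constants. -/
lemma const_of (g : SpecialLinearGroup (Fin 2) F[X]) (h : g.1 1 0 = 0) :
    ∃ a b : F, a * b = 1 ∧ g.1 0 0 = C a ∧ g.1 1 1 = C b := by
  have h1 := det_eq g
  rw [h, mul_zero, sub_zero] at h1
  obtain ⟨a, -, ha⟩ := Polynomial.isUnit_iff.1 (IsUnit.of_mul_eq_one _ h1)
  obtain ⟨b, -, hb⟩ := Polynomial.isUnit_iff.1 (IsUnit.of_mul_eq_one _ ((mul_comm _ _).trans h1))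
  refine ⟨a, b, ?_, ha.symm, hb.symm⟩
  rw [← ha, ← hb, ← C_mul] at h1
  exact C_injective (h1.trans C_1.symm)

lemma div_unique' (a c q r : F[X]) (h : a = q * c + r) (hr : r.degree < c.degree) :
    a / c = q := by
  have hc : c ≠ 0 := by rintro rfl; simp at hr
  have h1 := EuclideanDomain.div_add_mod a c
  have h2 : (a % c).degree < c.degree := degree_mod_lt a hc
  by_contra hne
  have h3 : c * (a / c - q) = r - a % c := by linear_combination h1 + h
  have h4 : (r - a % c).degree < c.degree := (degree_sub_le _ _).trans_lt (max_lt hr h2)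
  rw [← h3] at h4
  exact absurd (degree_le_mul_left c (sub_ne_zero.2 hne)) (not_le.2 h4)

lemma rho_U (f : F[X]) (g : SpecialLinearGroup (Fin 2) F[X]) :
    rho φ (U f * g) = U (φ f) * rho φ g := by
  by_cases h : g.1 1 0 = 0
  · obtain ⟨a, b, hab, ha, hb⟩ := const_of g h
    apply Subtype.ext
    rw [rho_pos _ _ (by rw [U_mul_apply]; simp [h]), U_mul_apply, U_mul_apply, rho_pos _ _ h]
    have : f * C b = b • f := by rw [mul_comm, smul_eq_C_mul]
    simp [h, ha, hb, this, mul_comm]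
  · have hq : (U f * g).1 0 0 / (U f * g).1 1 0 = f + g.1 0 0 / g.1 1 0 := by
      rw [U_mul_apply]
      simp only [of_apply, cons_val', cons_val_zero, cons_val_one, cons_val_fin_one]
      refine div_unique' _ _ _ (g.1 0 0 % g.1 1 0) ?_ (degree_mod_lt _ h)
      linear_combination -EuclideanDomain.div_add_mod (g.1 0 0) (g.1 1 0)
    have hs : step (U f * g) = step g := by
      rw [step, hq, U_add, step]; group
    rw [rho_neg _ _ (by rw [U_mul_apply]; simpa using h), hs, hq, map_add, U_add, rho_neg _ g h]
    simp only [mul_assoc]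

lemma D_U {R : Type*} [CommRing R] (a b : R) (h : a * b = 1) (f : R) :
    D a b h * U f = U (a * a * f) * D a b h := by
  apply Subtype.ext
  rw [U_mul_apply, D_mul_apply]
  have : a * a * f * b = a * f := by linear_combination a * f * h
  simp [D, U, this]

lemma D_W {R : Type*} [CommRing R] (a b : R) (h : a * b = 1) :
    D a b h * W = W * D b a (by rw [mul_comm, h]) := by
  apply Subtype.ext
  rw [W_mul_apply, D_mul_apply]
  simp [D, W]

lemma rho_D (n : WithBot ℕ) : ∀ (a b : F) (h : a * b = 1) (g : SpecialLinearGroup (Fin 2) F[X]),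
    (g.1 1 0).degree = n →
    rho φ (D (C a) (C b) (by rw [← C_mul, h, C_1]) * g) = D a b h * rho φ g := by
  induction n using WellFoundedLT.induction with
  | ind n ih =>
  intro a b hab g hn
  have hab' : C a * C b = (1 : F[X]) := by rw [← C_mul, hab, C_1]
  have ha0 : a ≠ 0 := left_ne_zero_of_mul_eq_one hab
  have hb0 : b ≠ 0 := right_ne_zero_of_mul_eq_one hab
  by_cases h : g.1 1 0 = 0
  · apply Subtype.ext
    rw [rho_pos _ _ (by rw [D_mul_apply]; simp [h]), D_mul_apply, D_mul_apply, rho_pos _ _ h]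
    simp [← smul_eq_C_mul]
  · have hq : (D (C a) (C b) hab' * g).1 0 0 / (D (C a) (C b) hab' * g).1 1 0
        = C a * C a * (g.1 0 0 / g.1 1 0) := by
      rw [D_mul_apply]
      simp only [of_apply, cons_val', cons_val_zero, cons_val_one, cons_val_fin_one]
      refine div_unique' _ _ _ (C a * (g.1 0 0 % g.1 1 0)) ?_ ?_
      · linear_combination -C a * EuclideanDomain.div_add_mod (g.1 0 0) (g.1 1 0) -
          C a * (g.1 0 0 / g.1 1 0) * g.1 1 0 * hab'
      · rw [degree_C_mul ha0, degree_C_mul hb0]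
        exact degree_mod_lt _ h
    have hs : step (D (C a) (C b) hab' * g) = D (C b) (C a) ((mul_comm _ _).trans hab') * step g := by
      have e := step_eq (D (C a) (C b) hab' * g)
      rw [hq] at e
      conv_lhs at e => rw [step_eq g, ← mul_assoc, ← mul_assoc, D_U, mul_assoc (U _), D_W]
      simp only [mul_assoc, mul_right_inj] at e
      exact e.symm
    rw [rho_neg _ _ (by rw [D_mul_apply]; simp [h, hb0]), hs, hq, rho_neg _ g h,
      ih _ (by rw [← hn, step_10]; exact EuclideanDomain.mod_lt _ h) b a
        ((mul_comm _ _).trans hab) (step g) rfl]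
    have : φ (C a * C a * (g.1 0 0 / g.1 1 0)) = a * a * φ (g.1 0 0 / g.1 1 0) := by
      rw [← C_mul, ← smul_eq_C_mul, map_smul, smul_eq_mul]
    rw [this, ← mul_assoc, ← mul_assoc, ← mul_assoc, D_U, mul_assoc (U _) (D a b hab), D_W a b hab]
    simp only [mul_assoc]

lemma W_sq_mul_W_inv {R : Type*} [CommRing R] :
    (W : SpecialLinearGroup (Fin 2) R)⁻¹ = D (-1) (-1) (by simp) * W := by
  apply Subtype.ext
  rw [← mul_one W⁻¹, W_inv_mul_apply, D_mul_apply]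
  simp [W]

/-- The generic case: the top degree is larger. -/
lemma rho_W_gt (g : SpecialLinearGroup (Fin 2) F[X]) (h : (g.1 1 0).degree < (g.1 0 0).degree) :
    rho φ (W * g) = W * rho φ g := by
  have h0 : g.1 0 0 ≠ 0 := by
    intro h0; rw [h0] at h; simp at h
  have hq : (W * g).1 0 0 / (W * g).1 1 0 = 0 := by
    rw [W_mul_apply]
    simp only [of_apply, cons_val', cons_val_zero, cons_val_one, cons_val_fin_one]
    rw [Polynomial.div_eq_zero_iff (by simpa using h0)]
    simpa using h
  rw [rho_neg _ _ (by rw [W_mul_apply]; simpa using h0), step, hq]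
  simp [U_zero]

lemma rho_W_lt (g : SpecialLinearGroup (Fin 2) F[X]) (h : (g.1 0 0).degree < (g.1 1 0).degree) :
    rho φ (W * g) = W * rho φ g := by
  have h1 : rho φ (W * (W⁻¹ * g)) = W * rho φ (W⁻¹ * g) := by
    apply rho_W_gt
    rw [W_inv_mul_apply]
    simpa using h
  have h2 : rho φ (D (C (-1)) (C (-1)) (by simp) * (W * g)) = D (-1) (-1) (by simp) * rho φ (W * g) :=
    rho_D φ _ _ _ (by simp) _ rfl
  have h3 : D (C (-1)) (C (-1)) (by simp) * (W * g) = W⁻¹ * g := by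
    rw [W_sq_mul_W_inv]; simp [mul_assoc]
  rw [h3] at h2
  rw [mul_inv_cancel_left, h2] at h1
  rw [h1, ← mul_assoc W (D _ _ _), ← D_W (-1 : F) (-1) (by simp), ← W_sq_mul_W_inv,
    mul_inv_cancel_left]

lemma WUW {R : Type*} [CommRing R] (s t : R) (h : s * t = 1) :
    (W * U s * W : SpecialLinearGroup (Fin 2) R)
      = U (-t) * D (-t) (-s) (by rw [neg_mul_neg, mul_comm, h]) * W * U (-t) := by
  apply Subtype.ext
  rw [mul_assoc, mul_assoc, mul_assoc, W_mul_apply, U_mul_apply, U_mul_apply, D_mul_apply,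
    W_mul_apply]
  ext i j; fin_cases i <;> fin_cases j <;> simp [W, U]
  · rw [mul_comm, h]
  · linear_combination (-t) * h
  · exact h.symm

lemma rho_W (h1 : φ 1 = 1) (g : SpecialLinearGroup (Fin 2) F[X]) :
    rho φ (W * g) = W * rho φ g := by
  have hC (x : F) : φ (C x) = x := by
    rw [← mul_one (C x), ← smul_eq_C_mul, map_smul, h1, smul_eq_mul, mul_one]
  rcases lt_trichotomy (g.1 0 0).degree (g.1 1 0).degree with h | h | h
  · exact rho_W_lt φ g h
  · have hc : g.1 1 0 ≠ 0 := by
      intro hc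
      have := det_eq g
      rw [hc, degree_zero, degree_eq_bot] at h
      simp [h, hc] at this
    have ha : g.1 0 0 ≠ 0 := by
      intro ha
      rw [ha, degree_zero, eq_comm, degree_eq_bot] at h
      exact hc h
    obtain ⟨s, hs⟩ : ∃ s, g.1 0 0 / g.1 1 0 = C s := by
      have hd := degree_add_div hc h.ge
      rw [h, add_comm] at hd
      refine ⟨_, eq_C_of_degree_eq_zero ?_⟩
      have hb : (g.1 1 0).degree ≠ ⊥ := by simpa using hc
      exact (WithBot.add_right_inj hb).1 (hd.trans (zero_add _).symm)
    have hs0 : s ≠ 0 := by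
      rintro rfl
      rw [C_0, Polynomial.div_eq_zero_iff hc] at hs
      exact hs.ne h
    have hst : s * s⁻¹ = 1 := mul_inv_cancel₀ hs0
    have hst1 : (C s * C s⁻¹ : F[X]) = 1 := by rw [← C_mul, hst, C_1]
    have hst2 : -s⁻¹ * -s = 1 := by rw [neg_mul_neg, mul_comm, hst]
    have hst' : (C (-s⁻¹) * C (-s) : F[X]) = 1 := by rw [← C_mul, hst2, C_1]
    have e : W * g = U (-C s⁻¹) * (D (C (-s⁻¹)) (C (-s)) hst' *
        (W * (U (-C s⁻¹) * step g))) := by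
      conv_lhs => rw [step_eq g, hs, ← mul_assoc, ← mul_assoc, WUW _ _ hst1]
      simp only [mul_assoc, C_neg]
    have hd : ((step g).1 1 0).degree < ((step g).1 0 0).degree := by
      rw [step_10, step_00, degree_neg]
      exact EuclideanDomain.mod_lt _ hc
    rw [e, rho_U, rho_D φ _ _ _ hst2 _ rfl, rho_W_gt, rho_U,
      rho_neg _ g hc, hs, map_neg, hC, hC, ← mul_assoc W (U s * W), ← mul_assoc W (U s), WUW _ _ hst]
    · simp only [mul_assoc]
    · rw [U_mul_apply]
      simp only [of_apply, cons_val', cons_val_zero, cons_val_one, cons_val_fin_one]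
      rw [degree_add_eq_left_of_degree_lt]
      · exact hd
      · rw [← C_neg]
        refine lt_of_le_of_lt ?_ hd
        refine (degree_mul_le _ _).trans ?_
        calc _ ≤ 0 + ((step g).1 1 0).degree := by gcongr; exact degree_C_le
          _ = _ := zero_add _
  · exact rho_W_gt φ g h

lemma rho_mul_aux (h1 : φ 1 = 1) (n : WithBot ℕ) : ∀ (g h : SpecialLinearGroup (Fin 2) F[X]),
    (g.1 1 0).degree = n → rho φ (g * h) = rho φ g * rho φ h := by
  induction n using WellFoundedLT.induction with
  | ind n ih =>
  intro g k hn
  by_cases h : g.1 1 0 = 0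
  · obtain ⟨a, b, hab, ha, hb⟩ := const_of g h
    have hab' : C a * C b = (1 : F[X]) := by rw [← C_mul, hab, C_1]
    have e : g = U (a • g.1 0 1) * D (C a) (C b) hab' := by
      apply Subtype.ext
      rw [U_mul_apply]
      have : C a * g.1 0 1 * C b = g.1 0 1 := by linear_combination g.1 0 1 * hab'
      ext i j : 2
      fin_cases i <;> fin_cases j <;> simp [D, h, ha, hb, smul_eq_C_mul, this]
    have e2 : rho φ g = U (φ (a • g.1 0 1)) * D a b hab := by
      apply Subtype.ext
      rw [rho_pos _ _ h, U_mul_apply]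
      have : a * φ (g.1 0 1) * b = φ (g.1 0 1) := by linear_combination φ (g.1 0 1) * hab
      simp [D, ha, hb, this]
    conv_lhs => rw [e]
    rw [mul_assoc, rho_U, rho_D φ _ a b hab _ rfl, e2, mul_assoc]
  · conv_lhs => rw [step_eq g]
    rw [mul_assoc, mul_assoc, rho_U, rho_W φ h1,
      ih _ (by rw [← hn, step_10]; exact EuclideanDomain.mod_lt _ h) (step g) k rfl,
      rho_neg _ g h]
    simp only [mul_assoc]

/-- The homomorphism attached to a functional. -/
noncomputable def rhoHom (h1 : φ 1 = 1) :
    SpecialLinearGroup (Fin 2) F[X] →* SpecialLinearGroup (Fin 2) F :=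
  MonoidHom.mk' (rho φ) fun g h => rho_mul_aux φ h1 _ g h rfl

lemma rhoHom_U (h1 : φ 1 = 1) (f : F[X]) : U f ∈ (rhoHom φ h1).ker ↔ φ f = 0 := by
  rw [MonoidHom.mem_ker]
  change rho φ (U f) = 1 ↔ _
  have h : rho φ (U f) = U (φ f) := by
    apply Subtype.ext
    rw [rho_pos _ _ (by simp [U])]
    simp [U]
  rw [h, ← U_zero]
  constructor
  · intro e
    have := congrArg (fun m : SpecialLinearGroup (Fin 2) F => m.1 0 1) e
    simpa [U] using this
  · intro e; rw [e]

open Classical in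
/-- The functional attached to a set of natural numbers. -/
noncomputable def phi (S : Set ℕ) : F[X] →ₗ[F] F :=
  (Polynomial.basisMonomials F).constr F fun n => if n = 0 ∨ n - 1 ∈ S then 1 else 0

open Classical in
lemma phi_pow (S : Set ℕ) (n : ℕ) :
    phi (F := F) S (X ^ n) = if n = 0 ∨ n - 1 ∈ S then 1 else 0 := by
  have := (Polynomial.basisMonomials F).constr_basis F
    (fun n => if n = 0 ∨ n - 1 ∈ S then (1 : F) else 0) n
  rw [Polynomial.coe_basisMonomials] at this
  rw [X_pow_eq_monomial]
  exact this

lemma phi_one (S : Set ℕ) : phi (F := F) S 1 = 1 := by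
  have := phi_pow (F := F) S 0
  simpa using this

lemma ker_injective :
    Function.Injective fun S : Set ℕ => (rhoHom (phi (F := F) S) (phi_one S)).ker := by
  intro S T h
  ext n
  have h2 := rhoHom_U (phi (F := F) S) (phi_one S) (X ^ (n + 1))
  have h3 := rhoHom_U (phi (F := F) T) (phi_one T) (X ^ (n + 1))
  simp only at h
  rw [h, h3, phi_pow, phi_pow] at h2
  by_cases hS : n ∈ S <;> by_cases hT : n ∈ T <;> simp_all

lemma finite_quot [Finite F] (f : F[X]) (hf : f ≠ 0) : Finite (F[X] ⧸ Ideal.span {f}) := by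
  have : Module.Finite F (AdjoinRoot f) := (AdjoinRoot.powerBasis hf).finite
  exact Module.finite_of_finite F (M := AdjoinRoot f)

lemma countable_cong [Finite F] :
    {Γ : Subgroup (SpecialLinearGroup (Fin 2) F[X]) | IsCongruenceSubgroup Γ}.Countable := by
  have hc : Countable F[X] := by
    have hi : Function.Injective fun p : F[X] => (⟨p.natDegree, fun i => p.coeff i⟩ :
        Σ n : ℕ, Fin (n + 1) → F) := by
      intro p r hpr
      have h1 : p.natDegree = r.natDegree := congrArg Sigma.fst hpr
      ext n
      by_cases hn : n ≤ p.natDegree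
      · have h2 := congrArg (fun x : Σ n : ℕ, Fin (n + 1) → F =>
          if h : n < x.1 + 1 then x.2 ⟨n, h⟩ else 0) hpr
        have hn' := hn
        rw [h1] at hn'
        simpa [Nat.lt_succ_iff, hn, hn'] using h2
      · rw [coeff_eq_zero_of_natDegree_lt (by omega), coeff_eq_zero_of_natDegree_lt (by omega)]
    exact hi.countable
  have hsub : {Γ : Subgroup (SpecialLinearGroup (Fin 2) F[X]) | IsCongruenceSubgroup Γ} ⊆
      ⋃ f : {f : F[X] // f ≠ 0}, {Γ | MonoidHom.ker (SpecialLinearGroup.map (n := Fin 2)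
        (Ideal.Quotient.mk (Ideal.span {f.1}))) ≤ Γ} := by
    rintro Γ ⟨I, hI, hΓ⟩
    obtain ⟨f, rfl⟩ := (IsPrincipalIdealRing.principal I).principal
    rw [Set.mem_iUnion]
    refine ⟨⟨f, ?_⟩, hΓ⟩
    rintro rfl
    simp at hI
  refine (Set.countable_iUnion fun f => ?_).mono hsub
  have := finite_quot f.1 f.2
  have : Finite (Matrix (Fin 2) (Fin 2) (F[X] ⧸ Ideal.span {f.1})) :=
    inferInstanceAs (Finite (Fin 2 → Fin 2 → _))
  have : Finite (SpecialLinearGroup (Fin 2) (F[X] ⧸ Ideal.span {f.1})) := Subtype.finite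
  refine (Set.Finite.of_finite_image (f := Subgroup.map (SpecialLinearGroup.map (n := Fin 2)
        (Ideal.Quotient.mk (Ideal.span {f.1})))) (Set.toFinite _) ?_).countable
  intro Γ hΓ Δ hΔ e
  have := congrArg (Subgroup.comap (SpecialLinearGroup.map (n := Fin 2)
        (Ideal.Quotient.mk (Ideal.span {f.1})))) e
  rwa [Subgroup.comap_map_eq_self hΓ, Subgroup.comap_map_eq_self hΔ] at this

lemma not_countable [Finite F] :
    ¬ {Γ : Subgroup (SpecialLinearGroup (Fin 2) F[X]) |
        Γ.FiniteIndex ∧ ¬ IsCongruenceSubgroup Γ}.Countable := by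
  intro h
  have h2 := h.union (countable_cong (F := F))
  have hfin : Finite (SpecialLinearGroup (Fin 2) F) := by
    have : Finite (Matrix (Fin 2) (Fin 2) F) := inferInstanceAs (Finite (Fin 2 → Fin 2 → _))
    exact Subtype.finite
  have h3 : (Set.range fun S : Set ℕ => (rhoHom (phi (F := F) S) (phi_one S)).ker).Countable := by
    refine h2.mono ?_
    rintro _ ⟨S, rfl⟩
    by_cases hc : IsCongruenceSubgroup (rhoHom (phi (F := F) S) (phi_one S)).ker
    · exact Or.inr hc
    · exact Or.inl ⟨Subgroup.finiteIndex_ker _, hc⟩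
  have h4 : Countable (Set ℕ) := by
    have := h3.to_subtype
    exact (Set.rangeFactorization_injective.2 (ker_injective (F := F))).countable
  obtain ⟨f, hf⟩ := exists_injective_nat (Set ℕ)
  exact Function.cantor_injective f hf

end

end NonCong

/-- For `A = Fq[T]`, there exists a finite-index non-congruence subgroup of
`SL₂(A)`; indeed, the set of finite-index non-congruence subgroups of `SL₂(A)` is
uncountable. -/
theorem exists_noncongruence_and_uncountable (Fq : Type*) [Field Fq] [Fintype Fq] :
    (∃ Γ : Subgroup (Matrix.SpecialLinearGroup (Fin 2) (Polynomial Fq)),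
      Γ.FiniteIndex ∧ ¬ IsCongruenceSubgroup Γ) ∧
    ¬ {Γ : Subgroup (Matrix.SpecialLinearGroup (Fin 2) (Polynomial Fq)) |
        Γ.FiniteIndex ∧ ¬ IsCongruenceSubgroup Γ}.Countable := by
  have h := NonCong.not_countable (F := Fq)
  refine ⟨?_, h⟩
  by_contra hne
  apply h
  convert Set.countable_empty
  ext Γ
  simp only [Set.mem_ofPred_eq, Set.mem_empty_iff_false, iff_false]
  exact fun hΓ => hne ⟨Γ, hΓ⟩
end
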